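/- arXiv:1106.2213 — 5 statements merged into one kernel-verified Lean document; each statement's English description precedes it below -/
import Mathlib

section
/- Let Ω ⊆ [0,∞) be an interval, let f be a doubly concave function on Ω, and let p ∈ (0,1]. Then the function t ↦ (f(t^{1/p}))^p is concave on the interval Ω^p := {t^p : t ∈ Ω}. -/
open scoped ComplexOrder

section Defs

variable {n : ℕ}

/-- eigenvalues of a Hermitian matrix listed in increasing order -/
noncomputable def eigUp {A : Matrix (Fin n) (Fin n) ℂ} (hA : A.IsHermitian) : Fin n → ℝ :=
  fun i => hA.eigenvalues (Tuple.sort hA.eigenvalues i)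

/-- eigenvalues of a Hermitian matrix listed in decreasing order: `eigDown hA i = μ_{i+1}(A)` -/
noncomputable def eigDown {A : Matrix (Fin n) (Fin n) ℂ} (hA : A.IsHermitian) : Fin n → ℝ :=
  fun i => eigUp hA i.rev

/-- the product of the `k` smallest eigenvalues, `∏_{j=1}^k μ_{n+1-j}(A)` -/
noncomputable def prodSmall (A : Matrix (Fin n) (Fin n) ℂ) (k : ℕ) : ℝ :=
  if hA : A.IsHermitian then
    ∏ i ∈ Finset.univ.filter (fun i : Fin n => (i : ℕ) < k), eigUp hA i
  else 0

/-- the product of the `k` largest eigenvalues, `∏_{j=1}^k μ_j(A)` -/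
noncomputable def prodLarge (A : Matrix (Fin n) (Fin n) ℂ) (k : ℕ) : ℝ :=
  if hA : A.IsHermitian then
    ∏ i ∈ Finset.univ.filter (fun i : Fin n => (i : ℕ) < k), eigDown hA i
  else 0

/-- the sum of the `k` smallest eigenvalues, `∑_{j=1}^k μ_{n+1-j}(A)` -/
noncomputable def sumSmall (A : Matrix (Fin n) (Fin n) ℂ) (k : ℕ) : ℝ :=
  if hA : A.IsHermitian then
    ∑ i ∈ Finset.univ.filter (fun i : Fin n => (i : ℕ) < k), eigUp hA i
  else 0

/-- A doubly concave function on an interval `Ω ⊆ [0,∞)`. -/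
structure DoublyConcaveOn (f : ℝ → ℝ) (Ω : Set ℝ) : Prop where
  subset_Ici : Ω ⊆ Set.Ici (0 : ℝ)
  nonneg : ∀ x ∈ Ω, 0 ≤ f x
  continuousOn : ContinuousOn f Ω
  concaveOn : ConcaveOn ℝ Ω f
  geomConcave : ∀ x ∈ Ω, ∀ y ∈ Ω, Real.sqrt (f x * f y) ≤ f (Real.sqrt (x * y))

/-- `𝔼_p(Z) := (𝔼(Z^p))^{1/p}` -/
noncomputable def Ep {n m : ℕ} (E : Matrix (Fin n) (Fin n) ℂ →ₗ[ℂ] Matrix (Fin m) (Fin m) ℂ)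
    (p : ℝ) (Z : Matrix (Fin n) (Fin n) ℂ) : Matrix (Fin m) (Fin m) ℂ :=
  cfc (fun x : ℝ => x ^ (1 / p)) (E (cfc (fun x : ℝ => x ^ p) Z))

/-- the power `p`-mean `A β_p B := ((A^p + B^p)/2)^{1/p}` -/
noncomputable def betaP (p : ℝ) (A B : Matrix (Fin n) (Fin n) ℂ) : Matrix (Fin n) (Fin n) ℂ :=
  cfc (fun x : ℝ => x ^ (1 / p))
    ((2 : ℂ)⁻¹ • (cfc (fun x : ℝ => x ^ p) A + cfc (fun x : ℝ => x ^ p) B))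

noncomputable def sqrtM (A : Matrix (Fin n) (Fin n) ℂ) : Matrix (Fin n) (Fin n) ℂ :=
  cfc Real.sqrt A

noncomputable def invSqrtM (A : Matrix (Fin n) (Fin n) ℂ) : Matrix (Fin n) (Fin n) ℂ :=
  cfc (fun x : ℝ => (Real.sqrt x)⁻¹) A

/-- operator mean with representing function `h`: `A σ B = A^{1/2} h(A^{-1/2} B A^{-1/2}) A^{1/2}` -/
noncomputable def opMean (h : ℝ → ℝ) (A B : Matrix (Fin n) (Fin n) ℂ) :
    Matrix (Fin n) (Fin n) ℂ :=
  sqrtM A * cfc h (invSqrtM A * B * invSqrtM A) * sqrtM A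

/-- the weighted geometric mean `A #_α B` -/
noncomputable def sharp (α : ℝ) (A B : Matrix (Fin n) (Fin n) ℂ) : Matrix (Fin n) (Fin n) ℂ :=
  sqrtM A * cfc (fun x : ℝ => x ^ α) (invSqrtM A * B * invSqrtM A) * sqrtM A

/-- the (real) determinant of a Hermitian matrix -/
noncomputable def rdet (A : Matrix (Fin n) (Fin n) ℂ) : ℝ := (A.det).re

open Classical in
/-- the derived anti-norm `‖A‖_! = ‖A^{-p}‖^{-1/p}` for invertible positive `A`, `0` otherwise. -/
noncomputable def derivedAntiNorm (N : Matrix (Fin n) (Fin n) ℂ → ℝ) (p : ℝ)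
    (A : Matrix (Fin n) (Fin n) ℂ) : ℝ :=
  if IsUnit A.det then (N (cfc (fun x : ℝ => x ^ (-p)) A)) ^ (-(1 / p)) else 0

end Defs

open Filter Topology

/-- A concave function has a supporting line at every point strictly between two points of its
domain. -/
lemma ConcaveOn.exists_le_add_mul_sub {f : ℝ → ℝ} {s : Set ℝ} (hf : ConcaveOn ℝ s f)
    {x y z : ℝ} (hx : x ∈ s) (hy : y ∈ s) (hxz : x < z) (hzy : z < y) :
    ∃ m, ∀ w ∈ s, f w ≤ f z + m * (w - z) := by
  have hz : z ∈ s := hf.1.ordConnected.out hx hy ⟨hxz.le, hzy.le⟩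
  set R : Set ℝ := (fun w => (f w - f z) / (w - z)) '' {w ∈ s | z < w}
  have upper : ∀ v ∈ s, v < z → ∀ r ∈ R, r ≤ (f z - f v) / (z - v) := by
    rintro v hv hvz _ ⟨w, ⟨hw, hzw⟩, rfl⟩
    exact hf.slope_anti_adjacent hv hw hvz hzw
  have hne : R.Nonempty := ⟨_, y, ⟨hy, hzy⟩, rfl⟩
  refine ⟨sSup R, fun w hw => ?_⟩
  rcases lt_trichotomy w z with h | rfl | h
  · have := csSup_le hne (upper w hw h)
    rw [le_div_iff₀ (by linarith)] at this
    linarith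
  · simp
  · have := le_csSup ⟨_, upper x hx hxz⟩ ⟨w, ⟨hw, h⟩, rfl⟩
    rw [div_le_iff₀ (by linarith)] at this
    linarith

/-- A linear bound at `1` improves to a power bound under midpoint geometric concavity at `1`. -/
lemma le_rpow_of_sqrt_le {F : ℝ → ℝ} {s : Set ℝ} {k : ℝ}
    (hs : ∀ x ∈ s, √x ∈ s) (hlin : ∀ x ∈ s, F x ≤ 1 + k * (x - 1))
    (hgeom : ∀ x ∈ s, √(F x) ≤ F √x) {x : ℝ} (hx : x ∈ s) (hx0 : 0 < x) (hFx : 0 < F x) :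
    F x ≤ x ^ k := by
  have key : ∀ n : ℕ, x ^ ((1 / 2 : ℝ) ^ n) ∈ s ∧ 0 < F (x ^ ((1 / 2 : ℝ) ^ n)) ∧
      (1 / 2 : ℝ) ^ n * Real.log (F x) ≤ Real.log (F (x ^ ((1 / 2 : ℝ) ^ n))) := by
    intro n
    induction n with
    | zero => simpa using ⟨hx, hFx⟩
    | succ n ih =>
      obtain ⟨hmem, hpos, hlog⟩ := ih
      have hsqrt : x ^ ((1 / 2 : ℝ) ^ (n + 1)) = √(x ^ ((1 / 2 : ℝ) ^ n)) := by
        rw [Real.sqrt_eq_rpow, ← Real.rpow_mul hx0.le, pow_succ]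
      have hle := hgeom _ hmem
      have hpos' := Real.sqrt_pos.2 hpos
      rw [hsqrt]
      refine ⟨hs _ hmem, hpos'.trans_le hle, ?_⟩
      have := Real.log_le_log hpos' hle
      rw [Real.log_sqrt hpos.le] at this
      rw [pow_succ]
      linarith
  have htend : Tendsto (fun n : ℕ => (1 / 2 : ℝ) ^ n) atTop (𝓝[>] 0) :=
    tendsto_pow_atTop_nhdsWithin_zero_of_lt_one (by norm_num) (by norm_num)
  have hlim := ((tendsto_rpow_sub_one_log hx0).comp htend).const_mul k
  have hle : Real.log (F x) ≤ k * Real.log x := by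
    refine ge_of_tendsto' hlim fun n => ?_
    obtain ⟨hmem, hpos, hlog⟩ := key n
    have hn : (0 : ℝ) < (1 / 2) ^ n := by positivity
    have h1 := Real.log_le_sub_one_of_pos hpos
    have h2 := hlin _ hmem
    simp only [Function.comp_apply]
    rw [mul_left_comm, ← div_eq_inv_mul, le_div_iff₀ hn]
    linarith
  rw [Real.rpow_def_of_pos hx0, ← Real.log_le_iff_le_exp hFx]
  linarith

/-- Outside `k ∈ [0, 1]`, an affine function `1 + k * (x - 1)` satisfies the power bound. -/
lemma one_add_mul_sub_rpow_le {p k x : ℝ} (hp0 : 0 < p) (hp1 : p ≤ 1) (hk : k < 0 ∨ 1 < k)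
    (hx : 0 ≤ x) (hw : 0 ≤ 1 + k * (x - 1)) :
    (1 + k * (x - 1)) ^ p ≤ 1 + k * (x ^ p - 1) := by
  have hconc := Real.concaveOn_rpow hp0.le hp1
  rcases hk with hk | hk
  · have hk' : 0 < 1 - k := by linarith
    have h := hconc.2 (Set.mem_Ici.2 hw) (Set.mem_Ici.2 hx)
      (show 0 ≤ 1 / (1 - k) by positivity) (show 0 ≤ -k / (1 - k) from div_nonneg (by linarith) hk'.le)
      (by field_simp; ring)
    have he : 1 / (1 - k) * (1 + k * (x - 1)) + -k / (1 - k) * x = 1 := by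
      field_simp; ring
    simp only [smul_eq_mul, he, Real.one_rpow] at h
    have h2 := mul_le_mul_of_nonneg_left h hk'.le
    have h3 : (1 - k) * (1 / (1 - k) * (1 + k * (x - 1)) ^ p + -k / (1 - k) * x ^ p) =
        (1 + k * (x - 1)) ^ p - k * x ^ p := by
      field_simp; ring
    linarith
  · have hk' : 0 < k := by linarith
    have h := hconc.2 (Set.mem_Ici.2 hw) (Set.mem_Ici.2 zero_le_one)
      (show 0 ≤ 1 / k by positivity) (show 0 ≤ (k - 1) / k from div_nonneg (by linarith) hk'.le)
      (by field_simp; ring)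
    have he : 1 / k * (1 + k * (x - 1)) + (k - 1) / k * 1 = x := by
      field_simp; ring
    simp only [smul_eq_mul, he, Real.one_rpow] at h
    have h2 := mul_le_mul_of_nonneg_left h hk'.le
    have h3 : k * (1 / k * (1 + k * (x - 1)) ^ p + (k - 1) / k * 1) =
        (1 + k * (x - 1)) ^ p + (k - 1) := by
      field_simp
    linarith

/-- A linear bound at `1` passes to `p`-th powers under midpoint geometric concavity at `1`. -/
lemma rpow_le_of_sqrt_le {F : ℝ → ℝ} {s : Set ℝ} {k p : ℝ} (hp0 : 0 < p) (hp1 : p ≤ 1)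
    (hs : ∀ x ∈ s, √x ∈ s) (hF : ∀ x ∈ s, 0 ≤ F x) (hlin : ∀ x ∈ s, F x ≤ 1 + k * (x - 1))
    (hgeom : ∀ x ∈ s, √(F x) ≤ F √x) {x : ℝ} (hx : x ∈ s) (hx0 : 0 ≤ x) :
    F x ^ p ≤ 1 + k * (x ^ p - 1) := by
  have hw := hlin x hx
  by_cases hk : k < 0 ∨ 1 < k
  · exact (Real.rpow_le_rpow (hF x hx) hw hp0.le).trans
      (one_add_mul_sub_rpow_le hp0 hp1 hk hx0 ((hF x hx).trans hw))
  push Not at hk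
  obtain ⟨hk0, hk1⟩ := hk
  rcases (hF x hx).eq_or_lt with h0 | hpos
  · rw [← h0, Real.zero_rpow hp0.ne']
    nlinarith [mul_nonneg hk0 (Real.rpow_nonneg hx0 p)]
  rcases hx0.eq_or_lt with rfl | hx0
  · have hsq := hgeom 0 hx
    rw [Real.sqrt_zero, Real.sqrt_le_iff] at hsq
    have hF1 : 1 ≤ F 0 := by nlinarith
    have hk : k = 0 := by linarith
    have hFeq : F 0 = 1 := by subst hk; linarith
    simp [hk, hFeq]
  · calc F x ^ p ≤ (x ^ k) ^ p :=
          Real.rpow_le_rpow hpos.le (le_rpow_of_sqrt_le hs hlin hgeom hx hx0 hpos) hp0.le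
      _ = (1 + (x ^ p - 1)) ^ k := by
          rw [← Real.rpow_mul hx0.le, mul_comm, Real.rpow_mul hx0.le]; ring_nf
      _ ≤ 1 + k * (x ^ p - 1) :=
          rpow_one_add_le_one_add_mul_self (by linarith [Real.rpow_nonneg hx0.le p]) hk0 hk1

/-- The supporting-line inequality for `t ↦ f (t ^ (1 / p)) ^ p`, in the variable `x = t ^ (1 / p)`,
at a point `z` strictly between two points of the domain. -/
lemma DoublyConcaveOn.exists_rpow_le {f : ℝ → ℝ} {Ω : Set ℝ} (hf : DoublyConcaveOn f Ω)
    {p : ℝ} (hp0 : 0 < p) (hp1 : p ≤ 1) {x y z : ℝ} (hx : x ∈ Ω) (hy : y ∈ Ω)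
    (hxz : x < z) (hzy : z < y) :
    ∃ c, ∀ w ∈ Ω, f w ^ p ≤ f z ^ p + c * (w ^ p - z ^ p) := by
  have hord := hf.concaveOn.1.ordConnected
  have hz : z ∈ Ω := hord.out hx hy ⟨hxz.le, hzy.le⟩
  have hz0 : 0 < z := (hf.subset_Ici hx : (0 : ℝ) ≤ x).trans_lt hxz
  obtain ⟨m, hm⟩ := hf.concaveOn.exists_le_add_mul_sub hx hy hxz hzy
  rcases (hf.nonneg z hz).eq_or_lt with h0 | hfz
  · have hm0 : m = 0 := by
      have h1 := (hf.nonneg x hx).trans (hm x hx)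
      have h2 := (hf.nonneg y hy).trans (hm y hy)
      rw [← h0] at h1 h2
      apply le_antisymm <;> nlinarith
    refine ⟨0, fun w hw => ?_⟩
    have := hm w hw
    have hfw : f w = f z := by
      apply le_antisymm
      · simpa [hm0] using this
      · rw [← h0]; exact hf.nonneg w hw
    simp [hfw]
  set k := m * z / f z with hk
  refine ⟨f z ^ p * k / z ^ p, fun w hw => ?_⟩
  have hzp : 0 < z ^ p := Real.rpow_pos_of_pos hz0 p
  have hw0 : (0 : ℝ) ≤ w := hf.subset_Ici hw
  have hsqrt : ∀ v : ℝ, 0 ≤ v → √(v * z * z) = √v * z := fun v hv => by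
    rw [mul_assoc, Real.sqrt_mul hv, Real.sqrt_mul_self hz0.le]
  have hbound := rpow_le_of_sqrt_le (F := fun v => f (v * z) / f z)
    (s := {v | 0 ≤ v ∧ v * z ∈ Ω}) (k := k) hp0 hp1 ?_ ?_ ?_ ?_
    (x := w / z) ⟨by positivity, by rwa [div_mul_cancel₀ _ hz0.ne']⟩ (by positivity)
  · simp only [div_mul_cancel₀ _ hz0.ne', Real.div_rpow (hf.nonneg w hw) hfz.le,
      Real.div_rpow hw0 hz0.le] at hbound
    rw [div_le_iff₀ (Real.rpow_pos_of_pos hfz p)] at hbound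
    refine hbound.trans_eq ?_
    field_simp
  · rintro v ⟨hv, hvΩ⟩
    refine ⟨Real.sqrt_nonneg v, ?_⟩
    rcases le_total v 1 with h | h
    · refine hord.out hvΩ hz ⟨?_, ?_⟩
      · exact mul_le_mul_of_nonneg_right (Real.le_sqrt_of_sq_le (by nlinarith)) hz0.le
      · exact mul_le_of_le_one_left hz0.le (Real.sqrt_le_one.2 h)
    · refine hord.out hz hvΩ ⟨?_, ?_⟩
      · exact le_mul_of_one_le_left hz0.le (Real.one_le_sqrt.2 h)
      · exact mul_le_mul_of_nonneg_right
          (Real.sqrt_le_iff.2 ⟨hv, by nlinarith⟩) hz0.le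
  · rintro v ⟨-, hvΩ⟩
    exact div_nonneg (hf.nonneg _ hvΩ) hfz.le
  · rintro v ⟨-, hvΩ⟩
    rw [div_le_iff₀ hfz]
    refine (hm _ hvΩ).trans_eq ?_
    rw [hk]
    field_simp
  · rintro v ⟨hv, hvΩ⟩
    have h := hf.geomConcave _ hvΩ z hz
    rw [hsqrt v hv] at h
    rw [le_div_iff₀ hfz]
    refine le_trans (le_of_eq ?_) h
    rw [Real.sqrt_div (hf.nonneg _ hvΩ), Real.sqrt_mul (hf.nonneg _ hvΩ),
      div_mul_eq_mul_div, mul_div_assoc, Real.div_sqrt]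

theorem stmt_0 (f : ℝ → ℝ) (Ω : Set ℝ) (hf : DoublyConcaveOn f Ω)
    (p : ℝ) (hp0 : 0 < p) (hp1 : p ≤ 1) :
    ConcaveOn ℝ ((fun t : ℝ => t ^ p) '' Ω) (fun t : ℝ => f (t ^ (1 / p)) ^ p) := by
  have hconv : Convex ℝ ((fun t : ℝ => t ^ p) '' Ω) := by
    rw [Real.convex_iff_isPreconnected]
    exact (Real.convex_iff_isPreconnected.1 hf.concaveOn.1).image _
      (Real.continuous_rpow_const hp0.le).continuousOn
  have hroot : ∀ t ∈ Ω, (t ^ p) ^ (1 / p) = t := fun t ht => by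
    rw [one_div, Real.rpow_rpow_inv (hf.subset_Ici ht) hp0.ne']
  refine LinearOrder.concaveOn_of_lt hconv ?_
  rintro _ ⟨x, hx, rfl⟩ _ ⟨y, hy, rfl⟩ hxy a b ha hb hab
  obtain ⟨z, hz, hzeq⟩ := hconv (Set.mem_image_of_mem _ hx) (Set.mem_image_of_mem _ hy)
    ha.le hb.le hab
  have hx0 : (0 : ℝ) ≤ x := hf.subset_Ici hx
  have hy0 : (0 : ℝ) ≤ y := hf.subset_Ici hy
  have hz0 : (0 : ℝ) ≤ z := hf.subset_Ici hz
  rw [← hzeq]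
  simp only [smul_eq_mul, hroot x hx, hroot y hy, hroot z hz] at hxy hzeq ⊢
  obtain rfl : a = 1 - b := by linarith
  have hxz : x < z := (Real.rpow_lt_rpow_iff hx0 hz0 hp0).1 (by nlinarith)
  have hzy : z < y := (Real.rpow_lt_rpow_iff hz0 hy0 hp0).1 (by nlinarith)
  obtain ⟨c, hc⟩ := hf.exists_rpow_le hp0 hp1 hx hy hxz hzy
  calc (1 - b) * f x ^ p + b * f y ^ p
      ≤ (1 - b) * (f z ^ p + c * (x ^ p - z ^ p)) + b * (f z ^ p + c * (y ^ p - z ^ p)) := by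
        gcongr
        · exact hc x hx
        · exact hc y hy
    _ = f z ^ p := by rw [hzeq]; ring
end

section
/- Let 𝔼 : M_n(ℂ) → M_m(ℂ) be a unital positive linear map, let f be a doubly concave function on an interval Ω ⊆ [0,∞), let Z be an n×n Hermitian matrix with all eigenvalues in Ω, and let p ∈ (0,1]. Then f(𝔼_p(Z)) ≺^{w(log)} 𝔼_p(f(Z)), i.e. for every k = 1,…,m the product of the k smallest eigenvalues of f(𝔼_p(Z)) is at least the product of the k smallest eigenvalues of 𝔼_p(f(Z)). -/
open scoped ComplexOrder

/-- A concave function on a real set has a supporting line at every point lying strictly between two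
points of the set. -/
theorem ConcaveOn.exists_supporting_line {f : ℝ → ℝ} {Ω : Set ℝ} (hf : ConcaveOn ℝ Ω f)
    {a s b : ℝ} (ha : a ∈ Ω) (hb : b ∈ Ω) (has : a < s) (hsb : s < b) :
    ∃ β : ℝ, ∀ z ∈ Ω, f z ≤ f s + β * (z - s) := by
  have key : ∀ x ∈ Ω, ∀ y ∈ Ω, x < s → s < y →
      (f y - f s) / (y - s) ≤ (f s - f x) / (s - x) := fun x hx y hy hxs hsy =>
    hf.slope_anti_adjacent hx hy hxs hsy
  set S : Set ℝ := (fun y => (f y - f s) / (y - s)) '' {y ∈ Ω | s < y} with hS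
  have hne : S.Nonempty := ⟨_, b, ⟨hb, hsb⟩, rfl⟩
  have hbdd : BddAbove S := by
    refine ⟨(f s - f a) / (s - a), ?_⟩
    rintro _ ⟨y, ⟨hy, hsy⟩, rfl⟩
    exact key a ha y hy has hsy
  refine ⟨sSup S, fun z hz => ?_⟩
  rcases lt_trichotomy z s with h | h | h
  · have : sSup S ≤ (f s - f z) / (s - z) := by
      refine csSup_le hne ?_
      rintro _ ⟨y, ⟨hy, hsy⟩, rfl⟩
      exact key z hz y hy h hsy
    rw [le_div_iff₀ (by linarith)] at this
    linarith
  · simp [h]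
  · have : (f z - f s) / (z - s) ≤ sSup S := le_csSup hbdd ⟨z, ⟨hz, h⟩, rfl⟩
    rw [div_le_iff₀ (by linarith)] at this
    linarith

/-- If `y` lies below both the affine and the power function of `r` that take the value `1` with
slope `γ` at `1`, then `y ^ p` lies below the corresponding affine function of `r ^ p`. -/
theorem rpow_le_one_add_mul_rpow_sub_one {r y γ p : ℝ} (hr : 0 ≤ r) (hy : 0 ≤ y)
    (hp0 : 0 < p) (hp1 : p ≤ 1) (haff : y ≤ 1 + γ * (r - 1)) (hpow : 0 ≤ γ → y ≤ r ^ γ) :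
    y ^ p ≤ 1 + γ * (r ^ p - 1) := by
  have hconc := (Real.concaveOn_rpow hp0.le hp1).2
  rcases lt_or_ge γ 0 with h | h
  · have hden : 0 < 1 - γ := by linarith
    have h1 := hconc (x := 1 + γ * (r - 1)) (hy.trans haff) (y := r) hr
      (a := 1 / (1 - γ)) (b := -γ / (1 - γ)) (by positivity)
      (div_nonneg (by linarith) hden.le) (by field_simp; ring)
    have h2 : (1 / (1 - γ)) • (1 + γ * (r - 1)) + (-γ / (1 - γ)) • r = 1 := by
      simp only [smul_eq_mul]; field_simp; ring
    rw [h2] at h1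
    simp only [smul_eq_mul, Real.one_rpow] at h1
    have h3 : (1 / (1 - γ)) * (1 + γ * (r - 1)) ^ p + (-γ / (1 - γ)) * r ^ p
        = ((1 + γ * (r - 1)) ^ p - γ * r ^ p) / (1 - γ) := by ring
    rw [h3, div_le_one hden] at h1
    have := Real.rpow_le_rpow hy haff hp0.le
    linarith
  · rcases le_or_gt γ 1 with h' | h'
    · have h2 : y ^ p ≤ (r ^ p) ^ γ := by
        rw [← Real.rpow_mul hr, mul_comm, Real.rpow_mul hr]
        exact Real.rpow_le_rpow hy (hpow h) hp0.le
      have h3 := Real.geom_mean_le_arith_mean2_weighted h (sub_nonneg.2 h')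
        (Real.rpow_nonneg hr p) zero_le_one (by ring)
      rw [Real.one_rpow] at h3
      linarith
    · have hγ : 0 < γ := by linarith
      have h1 := hconc (x := 1 + γ * (r - 1)) (hy.trans haff) (y := 1) (Set.mem_Ici.2 zero_le_one)
        (a := 1 / γ) (b := 1 - 1 / γ) (by positivity)
        (by rw [sub_nonneg, div_le_one hγ]; exact h'.le) (by ring)
      have h2 : (1 / γ) • (1 + γ * (r - 1)) + (1 - 1 / γ) • (1 : ℝ) = r := by
        simp only [smul_eq_mul]; field_simp; ring
      rw [h2] at h1
      simp only [smul_eq_mul, Real.one_rpow] at h1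
      have h3 : (1 / γ) * (1 + γ * (r - 1)) ^ p + (1 - 1 / γ) * 1
        = ((1 + γ * (r - 1)) ^ p + (γ - 1)) / γ := by field_simp
      rw [h3, div_le_iff₀ hγ] at h1
      have := Real.rpow_le_rpow hy haff hp0.le
      linarith

/-- A supporting line of a doubly concave function at `s` with logarithmic slope `γ ≥ 0` yields the
supporting power function of exponent `γ`. -/
theorem DoublyConcaveOn.div_le_rpow_of_supporting_line {f : ℝ → ℝ} {Ω : Set ℝ}
    (hf : DoublyConcaveOn f Ω) {s z γ : ℝ} (hs : s ∈ Ω) (hz : z ∈ Ω) (hs0 : 0 < s) (hfs : 0 < f s)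
    (hγ : 0 ≤ γ) (hline : ∀ x ∈ Ω, f x / f s ≤ 1 + γ * (x / s - 1)) :
    f z / f s ≤ (z / s) ^ γ := by
  have hz0 : 0 ≤ z := hf.subset_Ici hz
  have hfz : 0 ≤ f z := hf.nonneg z hz
  rcases hz0.eq_or_lt with rfl | hz0
  · rcases hfz.eq_or_lt with h0 | h0
    · rw [← h0, zero_div]; positivity
    · have h1 := hf.geomConcave 0 hz s hs
      rw [zero_mul, Real.sqrt_zero, Real.sqrt_le_left h0.le] at h1
      have h2 : f s ≤ f 0 := by nlinarith
      have h3 := hline 0 hz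
      have h4 : 1 ≤ f 0 / f s := (one_le_div hfs).2 h2
      rw [zero_div] at h3 ⊢
      have h5 : γ = 0 := by linarith
      rw [h5, Real.rpow_zero]
      rw [h5] at h3
      linarith
  · have hr : 0 < z / s := by positivity
    have step : ∀ k : ℕ, ∃ x ∈ Ω, x / s = (z / s) ^ (((2 : ℝ) ^ k)⁻¹) ∧
        f z / f s ≤ (f x / f s) ^ (2 ^ k) := by
      intro k
      induction k with
      | zero => exact ⟨z, hz, by simp, by simp⟩
      | succ k ih =>
        obtain ⟨x, hx, hxs, hle⟩ := ih
        have hx0 : 0 ≤ x := hf.subset_Ici hx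
        have hfx : 0 ≤ f x := hf.nonneg x hx
        have hmem : Real.sqrt (x * s) ∈ Ω := by
          have hoc := hf.concaveOn.1.ordConnected
          rcases le_total x s with h | h
          · refine hoc.out hx hs ⟨Real.le_sqrt_of_sq_le (by nlinarith), ?_⟩
            exact Real.sqrt_le_iff.2 ⟨hs0.le, by nlinarith⟩
          · refine hoc.out hs hx ⟨Real.le_sqrt_of_sq_le (by nlinarith), ?_⟩
            exact Real.sqrt_le_iff.2 ⟨hx0, by nlinarith⟩
        refine ⟨Real.sqrt (x * s), hmem, ?_, ?_⟩
        · have h1 : Real.sqrt (x * s) / s = Real.sqrt (x / s) := by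
            rw [Real.sqrt_mul hx0, Real.sqrt_div hx0, div_eq_div_iff hs0.ne' (by positivity),
              mul_assoc, Real.mul_self_sqrt hs0.le]
          rw [h1, hxs, Real.sqrt_eq_rpow, ← Real.rpow_mul hr.le]
          congr 1
          rw [pow_succ, mul_inv, one_div]
        · have h1 := hf.geomConcave x hx s hs
          have h2 : f x * f s ≤ f (Real.sqrt (x * s)) ^ 2 :=
            (Real.sqrt_le_left (hf.nonneg _ hmem)).1 h1
          have h3 : f x / f s ≤ (f (Real.sqrt (x * s)) / f s) ^ 2 := by
            rw [div_pow, div_le_div_iff₀ hfs (by positivity)]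
            nlinarith
          calc f z / f s ≤ (f x / f s) ^ (2 ^ k) := hle
            _ ≤ ((f (Real.sqrt (x * s)) / f s) ^ 2) ^ (2 ^ k) :=
              pow_le_pow_left₀ (by positivity) h3 _
            _ = _ := by rw [← pow_mul, pow_succ, mul_comm 2]
    have hbound : ∀ k : ℕ, f z / f s ≤
        Real.exp (γ * ((((2 : ℝ) ^ k)⁻¹)⁻¹ * ((z / s) ^ (((2 : ℝ) ^ k)⁻¹) - 1))) := by
      intro k
      obtain ⟨x, hx, hxs, hle⟩ := step k
      have h1 := hline x hx
      rw [hxs] at h1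
      have h2 := Real.add_one_le_exp (γ * ((z / s) ^ (((2 : ℝ) ^ k)⁻¹) - 1))
      refine hle.trans ((pow_le_pow_left₀ (div_nonneg (hf.nonneg x hx) hfs.le)
        (h1.trans ((add_comm _ _).trans_le h2)) _).trans_eq ?_)
      rw [← Real.exp_nat_mul]
      congr 1
      push_cast
      rw [inv_inv]
      ring
    have hlim : Filter.Tendsto (fun k : ℕ => ((2 : ℝ) ^ k)⁻¹) Filter.atTop
        (nhdsWithin 0 (Set.Ioi 0)) := by
      refine tendsto_nhdsWithin_iff.2 ⟨?_, Filter.Eventually.of_forall fun k => ?_⟩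
      · simpa using tendsto_pow_atTop_nhds_zero_of_lt_one (r := (2 : ℝ)⁻¹) (by norm_num)
          (by norm_num)
      · simp
    have hlim2 := ((tendsto_rpow_sub_one_log hr).comp hlim).const_mul γ
    have hlim3 := (Real.continuous_exp.tendsto _).comp hlim2
    rw [Real.rpow_def_of_pos hr, mul_comm]
    exact ge_of_tendsto' hlim3 hbound

/-- The `p`-mean of points of an interval of nonnegative numbers lies in this interval. -/
theorem DoublyConcaveOn.rpow_sum_mem {f : ℝ → ℝ} {Ω : Set ℝ} (hf : DoublyConcaveOn f Ω)
    {ι : Type*} [Fintype ι] {w z : ι → ℝ} (hw : ∀ i, 0 ≤ w i) (hw1 : ∑ i, w i = 1)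
    (hz : ∀ i, z i ∈ Ω) {p : ℝ} (hp0 : 0 < p) :
    (∑ i, w i * z i ^ p) ^ (1 / p) ∈ Ω := by
  have hz0 : ∀ i, 0 ≤ z i := fun i => hf.subset_Ici (hz i)
  have hne : (Finset.univ : Finset ι).Nonempty := by
    by_contra h
    rw [Finset.not_nonempty_iff_eq_empty] at h
    simp [h] at hw1
  obtain ⟨a, -, ha⟩ := Finset.exists_min_image Finset.univ z hne
  obtain ⟨b, -, hb⟩ := Finset.exists_max_image Finset.univ z hne
  have hroot : ∀ i, (z i ^ p) ^ (1 / p) = z i := fun i => by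
    rw [← Real.rpow_mul (hz0 i), mul_one_div_cancel hp0.ne', Real.rpow_one]
  have hconst : ∀ c : ℝ, ∑ i, w i * c = c := fun c => by rw [← Finset.sum_mul, hw1, one_mul]
  have hlo : z a ^ p ≤ ∑ i, w i * z i ^ p := by
    rw [← hconst (z a ^ p)]
    exact Finset.sum_le_sum fun i hi =>
      mul_le_mul_of_nonneg_left (Real.rpow_le_rpow (hz0 a) (ha i hi) hp0.le) (hw i)
  have hhi : ∑ i, w i * z i ^ p ≤ z b ^ p := by
    rw [← hconst (z b ^ p)]
    exact Finset.sum_le_sum fun i hi =>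
      mul_le_mul_of_nonneg_left (Real.rpow_le_rpow (hz0 i) (hb i hi) hp0.le) (hw i)
  have hza : 0 ≤ z a ^ p := Real.rpow_nonneg (hz0 a) p
  refine hf.concaveOn.1.ordConnected.out (hz a) (hz b) ⟨?_, ?_⟩
  · rw [← hroot a]
    exact Real.rpow_le_rpow hza hlo (by positivity)
  · rw [← hroot b]
    exact Real.rpow_le_rpow (hza.trans hlo) hhi (by positivity)

/-- **Jensen's inequality for `p`-means of doubly concave functions**: the value of `f` at a `p`-mean
dominates the `p`-mean of the values. -/
theorem DoublyConcaveOn.sum_rpow_le {f : ℝ → ℝ} {Ω : Set ℝ} (hf : DoublyConcaveOn f Ω)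
    {ι : Type*} [Fintype ι] {w z : ι → ℝ} (hw : ∀ i, 0 ≤ w i) (hw1 : ∑ i, w i = 1)
    (hz : ∀ i, z i ∈ Ω) {p : ℝ} (hp0 : 0 < p) (hp1 : p ≤ 1) :
    ∑ i, w i * f (z i) ^ p ≤ f ((∑ i, w i * z i ^ p) ^ (1 / p)) ^ p := by
  have hz0 : ∀ i, 0 ≤ z i := fun i => hf.subset_Ici (hz i)
  have hX : 0 ≤ ∑ i, w i * z i ^ p :=
    Finset.sum_nonneg fun i _ => mul_nonneg (hw i) (Real.rpow_nonneg (hz0 i) p)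
  obtain ⟨s, hs⟩ : ∃ s, s = (∑ i, w i * z i ^ p) ^ (1 / p) := ⟨_, rfl⟩
  have hs0 : 0 ≤ s := hs ▸ Real.rpow_nonneg hX _
  have hsp : s ^ p = ∑ i, w i * z i ^ p := by
    rw [hs, ← Real.rpow_mul hX, one_div_mul_cancel hp0.ne', Real.rpow_one]
  have hsΩ : s ∈ Ω := hs ▸ hf.rpow_sum_mem hw hw1 hz hp0
  rw [← hs]
  have hzero : ∑ i, w i * (z i ^ p - s ^ p) = 0 := by
    simp only [mul_sub, Finset.sum_sub_distrib, ← Finset.sum_mul, hw1, ← hsp]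
    ring
  by_cases hall : ∀ i, w i ≠ 0 → z i = s
  · have : ∀ i, w i * f (z i) ^ p = w i * f s ^ p := by
      intro i
      by_cases h : w i = 0
      · simp [h]
      · rw [hall i h]
    simp only [this, ← Finset.sum_mul, hw1, one_mul, le_refl]
  push Not at hall
  obtain ⟨i₀, hi₀, hne⟩ := hall
  have hex : (∃ i, z i < s) ∧ ∃ j, s < z j := by
    have hdiff : w i₀ * (z i₀ ^ p - s ^ p) ≠ 0 := by
      refine mul_ne_zero hi₀ (sub_ne_zero.2 fun h => hne ?_)
      exact (Real.rpow_left_inj (hz0 i₀) hs0 hp0.ne').1 h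
    constructor
    · by_contra! hcon
      exact hdiff ((Finset.sum_eq_zero_iff_of_nonneg fun i _ => mul_nonneg (hw i)
        (sub_nonneg.2 (Real.rpow_le_rpow hs0 (hcon i) hp0.le))).1 hzero i₀ (Finset.mem_univ _))
    · by_contra! hcon
      exact hdiff ((Finset.sum_eq_zero_iff_of_nonpos fun i _ => mul_nonpos_of_nonneg_of_nonpos (hw i)
        (sub_nonpos.2 (Real.rpow_le_rpow (hz0 i) (hcon i) hp0.le))).1 hzero i₀ (Finset.mem_univ _))
  obtain ⟨⟨a, ha⟩, b, hb⟩ := hex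
  have hspos : 0 < s := (hz0 a).trans_lt ha
  obtain ⟨β, hβ⟩ := hf.concaveOn.exists_supporting_line (hz a) (hz b) ha hb
  rcases (hf.nonneg s hsΩ).eq_or_lt with hfs | hfs
  · have hβ0 : β = 0 := by
      have h1 := (hf.nonneg _ (hz a)).trans (hβ _ (hz a))
      have h2 := (hf.nonneg _ (hz b)).trans (hβ _ (hz b))
      rw [← hfs] at h1 h2
      nlinarith
    have : ∀ i, f (z i) = 0 := fun i => by
      have := hβ _ (hz i)
      rw [hβ0, ← hfs] at this
      linarith [hf.nonneg _ (hz i)]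
    simp [this, ← hfs, Real.zero_rpow hp0.ne']
  · obtain ⟨γ, hγ⟩ : ∃ γ, γ = β * s / f s := ⟨_, rfl⟩
    have hline : ∀ x ∈ Ω, f x / f s ≤ 1 + γ * (x / s - 1) := by
      intro x hx
      have : 1 + γ * (x / s - 1) = (f s + β * (x - s)) / f s := by
        rw [hγ]; field_simp
      rw [this]
      exact div_le_div_of_nonneg_right (hβ x hx) hfs.le
    have hsp0 : 0 < s ^ p := Real.rpow_pos_of_pos hspos p
    have hfsp0 : 0 < f s ^ p := Real.rpow_pos_of_pos hfs p
    have hterm : ∀ i, w i * f (z i) ^ p ≤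
        w i * f s ^ p + f s ^ p * γ / s ^ p * (w i * (z i ^ p - s ^ p)) := by
      intro i
      have h1 := rpow_le_one_add_mul_rpow_sub_one (r := z i / s) (y := f (z i) / f s) (γ := γ)
        (div_nonneg (hz0 i) hs0) (div_nonneg (hf.nonneg _ (hz i)) hfs.le) hp0 hp1
        (hline _ (hz i))
        fun hγ0 => hf.div_le_rpow_of_supporting_line hsΩ (hz i) hspos hfs hγ0 hline
      rw [Real.div_rpow (hf.nonneg _ (hz i)) hfs.le, Real.div_rpow (hz0 i) hs0,
        div_le_iff₀ hfsp0] at h1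
      refine (mul_le_mul_of_nonneg_left h1 (hw i)).trans_eq ?_
      field_simp
    refine (Finset.sum_le_sum fun i _ => hterm i).trans_eq ?_
    rw [Finset.sum_add_distrib, ← Finset.mul_sum, hzero, ← Finset.sum_mul, hw1]
    ring

/-- Two finite real families with the same multiset of values agree up to a permutation. -/
theorem exists_perm_comp_eq_of_map_eq {ι : Type*} [Fintype ι] {c d : ι → ℝ}
    (h : Finset.univ.val.map c = Finset.univ.val.map d) : ∃ σ : Equiv.Perm ι, d ∘ σ = c := by
  classical
  have hcard : ∀ x, Fintype.card {i // c i = x} = Fintype.card {i // d i = x} := by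
    intro x
    have := congrArg (Multiset.count x) h
    simp only [Multiset.count_map] at this
    simp only [Fintype.card_subtype, Finset.card_def, Finset.filter_val]
    simpa only [eq_comm] using this
  exact ⟨Equiv.ofFiberEquiv fun x => Fintype.equivOfCardEq (hcard x),
    funext fun i => Equiv.ofFiberEquiv_map _ i⟩

/-- Among the products of `k` values of a nonnegative monotone family, the product of the first `k`
is the smallest. -/
theorem prod_filter_lt_le_prod {m k : ℕ} (hk1 : 1 ≤ k) (hkm : k ≤ m) {d : Fin m → ℝ}
    (hd : Monotone d) (hd0 : ∀ i, 0 ≤ d i) {J : Finset (Fin m)} (hJ : J.card = k) :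
    ∏ i ∈ Finset.univ.filter (fun i : Fin m => (i : ℕ) < k), d i ≤ ∏ i ∈ J, d i := by
  set K := Finset.univ.filter (fun i : Fin m => (i : ℕ) < k) with hK
  have hKcard : K.card = k := by
    rw [hK, Fin.card_filter_val_lt, min_eq_right hkm]
  have hcard : (K \ J).card = (J \ K).card := Finset.card_sdiff_comm (hKcard.trans hJ.symm)
  have hmem : ∀ i : Fin m, i ∈ K ↔ (i : ℕ) < k := fun i => by simp [hK]
  set θ := d ⟨k - 1, by omega⟩
  have h1 : ∏ i ∈ K \ J, d i ≤ θ ^ (K \ J).card := by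
    rw [← Finset.prod_const]
    refine Finset.prod_le_prod (fun i _ => hd0 i) fun i hi => hd ?_
    have := (hmem i).1 (Finset.mem_sdiff.1 hi).1
    exact Fin.le_def.2 (by simp only; omega)
  have h2 : θ ^ (J \ K).card ≤ ∏ i ∈ J \ K, d i := by
    rw [← Finset.prod_const]
    refine Finset.prod_le_prod (fun i _ => hd0 _) fun i hi => hd ?_
    have := mt (hmem i).2 (Finset.mem_sdiff.1 hi).2
    exact Fin.le_def.2 (by simp only; omega)
  rw [hcard] at h1
  rw [← Finset.prod_inter_mul_prod_sdiff K J d, ← Finset.prod_inter_mul_prod_sdiff J K d,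
    Finset.inter_comm J K]
  exact mul_le_mul_of_nonneg_left (h1.trans h2) (Finset.prod_nonneg fun i _ => hd0 i)

/-- The product over `J` of doubly stochastic averages of a nonnegative family dominates the product
of the family over some permuted copy of `J`. -/
theorem exists_perm_prod_le_prod_of_mem_doublyStochastic {ι : Type*} [Fintype ι] [DecidableEq ι]
    {S : Matrix ι ι ℝ} (hS : S ∈ doublyStochastic ℝ ι) {b : ι → ℝ} (hb : ∀ i, 0 ≤ b i)
    {J : Finset ι} (hJ : J.Nonempty) :
    ∃ σ : Equiv.Perm ι, ∏ j ∈ J, b (σ j) ≤ ∏ j ∈ J, ∑ i, S j i * b i := by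
  have hS0 : ∀ i j, 0 ≤ S i j := fun i j => nonneg_of_mem_doublyStochastic hS
  by_cases hzero : ∃ i, b i = 0
  · obtain ⟨i, hi⟩ := hzero
    obtain ⟨j, hj⟩ := hJ
    refine ⟨Equiv.swap j i, ?_⟩
    rw [Finset.prod_eq_zero hj (by rw [Equiv.swap_apply_left, hi])]
    exact Finset.prod_nonneg fun j _ => Finset.sum_nonneg fun i _ => mul_nonneg (hS0 j i) (hb i)
  push Not at hzero
  have hpos : ∀ i, 0 < b i := fun i => (hb i).lt_of_ne' (hzero i)
  have havg : ∀ j, ∏ i, b i ^ S j i ≤ ∑ i, S j i * b i := fun j =>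
    Real.geom_mean_le_arith_mean_weighted _ _ _ (fun i _ => hS0 j i)
      (sum_row_of_mem_doublyStochastic hS j) fun i _ => hb i
  have hgeo : ∏ j ∈ J, ∏ i, b i ^ S j i ≤ ∏ j ∈ J, ∑ i, S j i * b i :=
    Finset.prod_le_prod (fun j _ => Finset.prod_nonneg fun i _ => Real.rpow_nonneg (hb i) _)
      fun j _ => havg j
  suffices h : ∃ σ : Equiv.Perm ι, ∑ j ∈ J, Real.log (b (σ j)) ≤
      ∑ j ∈ J, ∑ i, S j i * Real.log (b i) by
    obtain ⟨σ, hσ⟩ := h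
    refine ⟨σ, le_trans ?_ hgeo⟩
    have h1 := Real.exp_le_exp.2 hσ
    simp only [Real.exp_sum, Real.exp_log (hpos _)] at h1
    refine h1.trans_eq (Finset.prod_congr rfl fun j _ => Finset.prod_congr rfl fun i _ => ?_)
    rw [Real.rpow_def_of_pos (hpos i), mul_comm]
  obtain ⟨w, hw0, hw1, hwS⟩ := exists_eq_sum_perm_of_mem_doublyStochastic hS
  have hrow : ∀ j, ∑ i, S j i * Real.log (b i) = ∑ σ, w σ * Real.log (b (σ j)) := by
    intro j
    have h1 : (S.mulVec fun i => Real.log (b i)) j = ∑ i, S j i * Real.log (b i) := rfl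
    rw [← h1, ← hwS, Matrix.sum_mulVec, Finset.sum_apply]
    refine Finset.sum_congr rfl fun σ _ => ?_
    rw [Matrix.smul_mulVec, Matrix.permMatrix_mulVec]
    rfl
  simp only [hrow]
  rw [Finset.sum_comm]
  simp only [← Finset.mul_sum]
  by_contra! hcon
  set D := ∑ σ, w σ * ∑ j ∈ J, Real.log (b (σ j)) with hD
  have h1 : ∑ σ, w σ * (∑ j ∈ J, Real.log (b (σ j)) - D) = 0 := by
    simp only [mul_sub, Finset.sum_sub_distrib, ← Finset.sum_mul, hw1, ← hD]
    ring
  have h2 := (Finset.sum_eq_zero_iff_of_nonneg fun σ _ =>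
    mul_nonneg (hw0 σ) (sub_nonneg.2 (hcon σ).le)).1 h1
  have h3 : ∀ σ, w σ = 0 := fun σ =>
    (mul_eq_zero.1 (h2 σ (Finset.mem_univ _))).resolve_right (sub_pos.2 (hcon σ)).ne'
  simp [h3] at hw1

section Spectral

open Matrix

variable {m n : ℕ}

theorem Matrix.IsHermitian.cfc_eq_mul_diagonal_mul {A : Matrix (Fin n) (Fin n) ℂ}
    (hA : A.IsHermitian) (g : ℝ → ℝ) :
    cfc g A = (hA.eigenvectorUnitary : Matrix (Fin n) (Fin n) ℂ) *
      diagonal (fun i => (g (hA.eigenvalues i) : ℂ)) *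
        (hA.eigenvectorUnitary : Matrix (Fin n) (Fin n) ℂ)ᴴ := by
  rw [hA.cfc_eq, IsHermitian.cfc, Unitary.conjStarAlgAut_apply]
  rfl

theorem Matrix.IsHermitian.eq_mul_diagonal_mul {A : Matrix (Fin n) (Fin n) ℂ}
    (hA : A.IsHermitian) :
    A = (hA.eigenvectorUnitary : Matrix (Fin n) (Fin n) ℂ) *
      diagonal (fun i => (hA.eigenvalues i : ℂ)) *
        (hA.eigenvectorUnitary : Matrix (Fin n) (Fin n) ℂ)ᴴ :=
  (cfc_id' ℝ A hA.isSelfAdjoint).symm.trans (hA.cfc_eq_mul_diagonal_mul _)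

theorem Matrix.IsHermitian.cfc_comp_real {A : Matrix (Fin n) (Fin n) ℂ} (hA : A.IsHermitian)
    (g h : ℝ → ℝ) : cfc g (cfc h A) = cfc (fun x => g (h x)) A :=
  (cfc_comp' g h A ((A.finite_real_spectrum.image h).continuousOn g)
    (A.finite_real_spectrum.continuousOn h) hA).symm

theorem Matrix.IsHermitian.posSemidef_cfc {A : Matrix (Fin n) (Fin n) ℂ} (hA : A.IsHermitian)
    {g : ℝ → ℝ} (hg : ∀ i, 0 ≤ g (hA.eigenvalues i)) : (cfc g A).PosSemidef := by
  rw [hA.cfc_eq_mul_diagonal_mul]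
  refine PosSemidef.mul_mul_conjTranspose_same (PosSemidef.diagonal fun i => ?_) _
  exact Complex.zero_le_real.2 (hg i)

/-- The increasingly ordered eigenvalues of `cfc g A` are a reordering of `g` applied to the
eigenvalues of `A`. -/
theorem Matrix.IsHermitian.exists_perm_prodSmall_cfc {A : Matrix (Fin n) (Fin n) ℂ}
    (hA : A.IsHermitian) (g : ℝ → ℝ) : ∃ τ : Equiv.Perm (Fin n),
      Monotone (fun i => g (hA.eigenvalues (τ i))) ∧ ∀ k, prodSmall (cfc g A) k =
        ∏ i ∈ Finset.univ.filter (fun i : Fin n => (i : ℕ) < k), g (hA.eigenvalues (τ i)) := by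
  have hC : (cfc g A).IsHermitian := cfc_predicate g A
  have hroots : Finset.univ.val.map hC.eigenvalues =
      Finset.univ.val.map (fun i => g (hA.eigenvalues i)) := by
    have h1 := hC.roots_charpoly_eq_eigenvalues
    rw [hA.charpoly_cfc_eq, Polynomial.roots_prod _ _
      (Finset.prod_ne_zero_iff.2 fun i _ => Polynomial.X_sub_C_ne_zero _)] at h1
    simp only [Polynomial.roots_X_sub_C, Multiset.bind_singleton] at h1
    refine Multiset.map_injective (f := ((↑) : ℝ → ℂ)) Complex.ofReal_injective ?_
    rw [Multiset.map_map, Multiset.map_map]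
    exact h1.symm
  obtain ⟨σ, hσ⟩ := exists_perm_comp_eq_of_map_eq hroots
  have heq : ∀ i, eigUp hC i = g (hA.eigenvalues (((Tuple.sort hC.eigenvalues).trans σ) i)) :=
    fun i => (congrFun hσ _).symm
  refine ⟨(Tuple.sort hC.eigenvalues).trans σ, ?_, fun k => ?_⟩
  · simp only [← heq]
    exact Tuple.monotone_sort hC.eigenvalues
  · rw [prodSmall, dif_pos hC]
    exact Finset.prod_congr rfl fun i _ => heq i

theorem Matrix.IsHermitian.exists_prodSmall_cfc_eq {A : Matrix (Fin n) (Fin n) ℂ}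
    (hA : A.IsHermitian) (g : ℝ → ℝ) {k : ℕ} (hk : k ≤ n) : ∃ J : Finset (Fin n), J.card = k ∧
      prodSmall (cfc g A) k = ∏ j ∈ J, g (hA.eigenvalues j) := by
  obtain ⟨τ, -, hτ⟩ := hA.exists_perm_prodSmall_cfc g
  refine ⟨(Finset.univ.filter (fun i : Fin n => (i : ℕ) < k)).map τ.toEmbedding, ?_, ?_⟩
  · rw [Finset.card_map, Fin.card_filter_val_lt, min_eq_right hk]
  · rw [hτ, Finset.prod_map]
    rfl

theorem Matrix.IsHermitian.prodSmall_cfc_le {A : Matrix (Fin n) (Fin n) ℂ} (hA : A.IsHermitian)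
    {g : ℝ → ℝ} (hg : ∀ i, 0 ≤ g (hA.eigenvalues i)) {k : ℕ} (hk1 : 1 ≤ k) (hk : k ≤ n)
    {J : Finset (Fin n)} (hJ : J.card = k) :
    prodSmall (cfc g A) k ≤ ∏ j ∈ J, g (hA.eigenvalues j) := by
  obtain ⟨τ, hmono, hτ⟩ := hA.exists_perm_prodSmall_cfc g
  have h := prod_filter_lt_le_prod hk1 hk hmono (fun i => hg (τ i))
    (J := J.map τ.symm.toEmbedding) (by rw [Finset.card_map, hJ])
  rw [hτ]
  simpa [Finset.prod_map] using h

/-- The squared moduli of the entries of a unitary matrix form a doubly stochastic matrix. -/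
theorem normSq_mem_doublyStochastic {W : Matrix (Fin n) (Fin n) ℂ}
    (hW : W ∈ Matrix.unitaryGroup (Fin n) ℂ) :
    Matrix.of (fun i j => Complex.normSq (W i j)) ∈ doublyStochastic ℝ (Fin n) := by
  refine mem_doublyStochastic_iff_sum.2 ⟨fun i j => Complex.normSq_nonneg _, fun i => ?_,
    fun j => ?_⟩
  · have h := congrFun (congrFun (Matrix.mem_unitaryGroup_iff.1 hW) i) i
    simp only [mul_apply, star_apply, one_apply_eq, RCLike.star_def, Complex.mul_conj] at h
    exact_mod_cast h
  · have h := congrFun (congrFun (Matrix.mem_unitaryGroup_iff'.1 hW) j) j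
    simp only [mul_apply, star_apply, one_apply_eq, RCLike.star_def, mul_comm (starRingEnd ℂ _),
      Complex.mul_conj] at h
    exact_mod_cast h

/-- The diagonal of a Hermitian matrix in an orthonormal basis is a doubly stochastic transform of its
eigenvalues. -/
theorem Matrix.IsHermitian.exists_doublyStochastic_diag {A : Matrix (Fin n) (Fin n) ℂ}
    (hA : A.IsHermitian) {U : Matrix (Fin n) (Fin n) ℂ} (hU : U ∈ Matrix.unitaryGroup (Fin n) ℂ) :
    ∃ S ∈ doublyStochastic ℝ (Fin n), ∀ j,
      ((Uᴴ * A * U) j j).re = ∑ i, S j i * hA.eigenvalues i := by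
  set V := (hA.eigenvectorUnitary : Matrix (Fin n) (Fin n) ℂ)
  have hW : Uᴴ * V ∈ Matrix.unitaryGroup (Fin n) ℂ :=
    mul_mem (Unitary.star_mem hU) hA.eigenvectorUnitary.2
  refine ⟨_, normSq_mem_doublyStochastic hW, fun j => ?_⟩
  have h1 : Uᴴ * A * U =
      (Uᴴ * V) * diagonal (fun i => (hA.eigenvalues i : ℂ)) * (Uᴴ * V)ᴴ := by
    conv_lhs => rw [hA.eq_mul_diagonal_mul]
    simp only [conjTranspose_mul, conjTranspose_conjTranspose, Matrix.mul_assoc]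
    rfl
  rw [h1, mul_apply, Complex.re_sum]
  refine Finset.sum_congr rfl fun i _ => ?_
  rw [mul_diagonal, conjTranspose_apply, mul_right_comm, RCLike.star_def, Complex.mul_conj]
  simp

/-- A unital positive map sends functions of `Z` to matrices whose diagonal entries, in any
orthonormal basis, are averages of the function over the eigenvalues of `Z`. -/
theorem exists_weights_of_unital_positive
    (E : Matrix (Fin n) (Fin n) ℂ →ₗ[ℂ] Matrix (Fin m) (Fin m) ℂ)
    (hpos : ∀ A : Matrix (Fin n) (Fin n) ℂ, A.PosSemidef → (E A).PosSemidef)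
    (hunital : E 1 = 1) {Z : Matrix (Fin n) (Fin n) ℂ} (hZ : Z.IsHermitian)
    {U : Matrix (Fin m) (Fin m) ℂ} (hU : U ∈ Matrix.unitaryGroup (Fin m) ℂ) :
    ∃ w : Fin m → Fin n → ℝ, (∀ j i, 0 ≤ w j i) ∧ (∀ j, ∑ i, w j i = 1) ∧
      ∀ (g : ℝ → ℝ) j, ((Uᴴ * E (cfc g Z) * U) j j).re = ∑ i, w j i * g (hZ.eigenvalues i) := by
  set V := (hZ.eigenvectorUnitary : Matrix (Fin n) (Fin n) ℂ)
  set P : Fin n → Matrix (Fin n) (Fin n) ℂ := fun i => V * diagonal (Pi.single i 1) * Vᴴ with hP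
  have hPpos : ∀ i, (P i).PosSemidef := fun i => by
    refine PosSemidef.mul_mul_conjTranspose_same (PosSemidef.diagonal fun l => ?_) _
    by_cases h : l = i
    · subst h; simp
    · simp [h]
  have hcfc : ∀ g : ℝ → ℝ, cfc g Z = ∑ i, (g (hZ.eigenvalues i) : ℂ) • P i := by
    intro g
    have hdiag : diagonal (fun i => (g (hZ.eigenvalues i) : ℂ)) =
        ∑ i, (g (hZ.eigenvalues i) : ℂ) • diagonal (Pi.single i (1 : ℂ)) := by
      ext a b
      rw [Matrix.sum_apply]
      by_cases h : a = b
      · subst h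
        simp [Pi.single_apply]
      · simp [h]
    rw [hZ.cfc_eq_mul_diagonal_mul, hdiag, Matrix.mul_sum, Matrix.sum_mul]
    simp only [hP, Matrix.mul_smul, Matrix.smul_mul]
    rfl
  have hval : ∀ (g : ℝ → ℝ) j, ((Uᴴ * E (cfc g Z) * U) j j).re =
      ∑ i, ((Uᴴ * E (P i) * U) j j).re * g (hZ.eigenvalues i) := by
    intro g j
    rw [hcfc, map_sum, Matrix.mul_sum, Matrix.sum_mul, Matrix.sum_apply, Complex.re_sum]
    refine Finset.sum_congr rfl fun i _ => ?_
    rw [map_smul, Matrix.mul_smul, Matrix.smul_mul, Matrix.smul_apply, smul_eq_mul,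
      Complex.re_ofReal_mul, mul_comm]
  refine ⟨fun j i => ((Uᴴ * E (P i) * U) j j).re, fun j i => ?_, fun j => ?_, hval⟩
  · exact (Complex.nonneg_iff.1 ((hpos _ (hPpos i)).conjTranspose_mul_mul_same U).diag_nonneg).1
  · have h := hval (fun _ => 1) j
    rw [cfc_const_one ℝ Z hZ.isSelfAdjoint, hunital, Matrix.mul_one,
      show Uᴴ * U = 1 from Matrix.mem_unitaryGroup_iff'.1 hU] at h
    simpa using h.symm

end Spectral

theorem stmt_1 {n m : ℕ} (E : Matrix (Fin n) (Fin n) ℂ →ₗ[ℂ] Matrix (Fin m) (Fin m) ℂ)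
    (hpos : ∀ A : Matrix (Fin n) (Fin n) ℂ, A.PosSemidef → (E A).PosSemidef)
    (hunital : E 1 = 1)
    (f : ℝ → ℝ) (Ω : Set ℝ) (hf : DoublyConcaveOn f Ω)
    (Z : Matrix (Fin n) (Fin n) ℂ) (hZ : Z.IsHermitian) (hΩ : spectrum ℝ Z ⊆ Ω)
    (p : ℝ) (hp0 : 0 < p) (hp1 : p ≤ 1) :
    ∀ k : ℕ, 1 ≤ k → k ≤ m →
      prodSmall (Ep E p (cfc f Z)) k ≤ prodSmall (cfc f (Ep E p Z)) k := by
  intro k hk1 hkm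
  have hz : ∀ i, hZ.eigenvalues i ∈ Ω := fun i => hΩ (hZ.eigenvalues_mem_spectrum_real i)
  have hX : (E (cfc (fun x : ℝ => x ^ p) Z)).PosSemidef :=
    hpos _ (hZ.posSemidef_cfc fun i => Real.rpow_nonneg (hf.subset_Ici (hz i)) p)
  have hB : (E (cfc (fun x : ℝ => f x ^ p) Z)).PosSemidef :=
    hpos _ (hZ.posSemidef_cfc fun i => Real.rpow_nonneg (hf.nonneg _ (hz i)) p)
  simp only [Ep]
  rw [hZ.cfc_comp_real, hX.1.cfc_comp_real]
  set x := hX.1.eigenvalues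
  set b := hB.1.eigenvalues
  set U := (hX.1.eigenvectorUnitary : Matrix (Fin m) (Fin m) ℂ) with hU
  have hUmem : U ∈ Matrix.unitaryGroup (Fin m) ℂ := hX.1.eigenvectorUnitary.2
  have hUU : U.conjTranspose * U = 1 := Matrix.mem_unitaryGroup_iff'.1 hUmem
  obtain ⟨w, hw0, hw1, hw⟩ := exists_weights_of_unital_positive E hpos hunital hZ hUmem
  have hxw : ∀ j, x j = ∑ i, w j i * hZ.eigenvalues i ^ p := by
    intro j
    rw [← hw (fun x => x ^ p) j]
    have h1 : U.conjTranspose * E (cfc (fun x : ℝ => x ^ p) Z) * U =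
        Matrix.diagonal (fun i => (x i : ℂ)) := by
      conv_lhs => rw [hX.1.eq_mul_diagonal_mul]
      rw [← hU, ← mul_assoc, ← mul_assoc, hUU, one_mul, mul_assoc, hUU, mul_one]
    rw [h1, Matrix.diagonal_apply_eq, Complex.ofReal_re]
  have hjensen : ∀ j, ((U.conjTranspose * E (cfc (fun x : ℝ => f x ^ p) Z) * U) j j).re ≤
      f (x j ^ (1 / p)) ^ p := by
    intro j
    rw [hw (fun x => f x ^ p) j, hxw j]
    exact hf.sum_rpow_le (hw0 j) (hw1 j) hz hp0 hp1
  obtain ⟨S, hS, hSdiag⟩ := hB.1.exists_doublyStochastic_diag hUmem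
  obtain ⟨J, hJ, hprod⟩ := hX.1.exists_prodSmall_cfc_eq (fun x => f (x ^ (1 / p))) hkm
  obtain ⟨σ, hσ⟩ := exists_perm_prod_le_prod_of_mem_doublyStochastic hS hB.eigenvalues_nonneg
    (J := J) (Finset.card_pos.1 (by omega))
  have hd0 : ∀ j, 0 ≤ ∑ i, S j i * b i := fun j => Finset.sum_nonneg fun i _ =>
    mul_nonneg (nonneg_of_mem_doublyStochastic hS) (hB.eigenvalues_nonneg i)
  have hmem : ∀ j, x j ^ (1 / p) ∈ Ω := fun j => by
    rw [hxw j]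
    exact hf.rpow_sum_mem (hw0 j) (hw1 j) hz hp0
  rw [hprod]
  calc prodSmall (cfc (fun x : ℝ => x ^ (1 / p)) (E (cfc (fun x : ℝ => f x ^ p) Z))) k
      ≤ ∏ j ∈ J.map σ.toEmbedding, b j ^ (1 / p) :=
        hB.1.prodSmall_cfc_le (fun i => Real.rpow_nonneg (hB.eigenvalues_nonneg i) _) hk1 hkm
          (by rw [Finset.card_map, hJ])
    _ = (∏ j ∈ J, b (σ j)) ^ (1 / p) := by
        rw [Finset.prod_map, ← Real.finsetProd_rpow _ _ fun j _ => hB.eigenvalues_nonneg _]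
        rfl
    _ ≤ (∏ j ∈ J, ∑ i, S j i * b i) ^ (1 / p) :=
        Real.rpow_le_rpow (Finset.prod_nonneg fun j _ => hB.eigenvalues_nonneg _) hσ (by positivity)
    _ = ∏ j ∈ J, (∑ i, S j i * b i) ^ (1 / p) :=
        (Real.finsetProd_rpow _ _ (fun j _ => hd0 j) _).symm
    _ ≤ ∏ j ∈ J, f (x j ^ (1 / p)) := by
        refine Finset.prod_le_prod (fun j _ => Real.rpow_nonneg (hd0 j) _) fun j _ => ?_
        refine (Real.rpow_le_rpow (hd0 j) ((hSdiag j).symm.trans_le (hjensen j))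
          (by positivity)).trans_eq ?_
        rw [← Real.rpow_mul (hf.nonneg _ (hmem j)), mul_one_div_cancel hp0.ne', Real.rpow_one]
end

section
/- Let 𝔼 : M_n(ℂ) → M_m(ℂ) be a unital positive linear map, let f be a doubly concave function on an interval Ω ⊆ [0,∞) that is moreover monotone (non-decreasing or non-increasing) on Ω, let Z be an n×n Hermitian matrix with all eigenvalues in Ω, and let p ∈ (0,1]. Then there exists a unitary V ∈ M_m(ℂ) such that f(𝔼_p(Z)) ≥ V 𝔼_p(f(Z)) V* in the positive semidefinite (Loewner) order. -/
open scoped ComplexOrder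

section PowerMeans

open Set Filter Topology

/-- A continuous midpoint-concave function on a compact interval is concave. -/
theorem concaveOn_Icc_of_midpoint {φ : ℝ → ℝ} {a b : ℝ} (hc : ContinuousOn φ (Icc a b))
    (hm : ∀ x ∈ Icc a b, ∀ y ∈ Icc a b, (φ x + φ y) / 2 ≤ φ ((x + y) / 2)) :
    ConcaveOn ℝ (Icc a b) φ := by
  refine LinearOrder.concaveOn_of_lt (convex_Icc a b) ?_
  intro x hx y hy hxy s t hs ht hst
  simp only [smul_eq_mul]
  have hsub : Icc x y ⊆ Icc a b := Icc_subset_Icc hx.1 hy.2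
  set k : ℝ := (φ y - φ x) / (y - x) with hk
  have hyx : 0 < y - x := by linarith
  have hkm : k * (y - x) = φ y - φ x := by rw [hk]; field_simp
  set ψ : ℝ → ℝ := fun u => φ u - (φ x + k * (u - x)) with hψ
  have hψc : ContinuousOn ψ (Icc x y) :=
    (hc.mono hsub).sub (by fun_prop)
  have hψx : ψ x = 0 := by simp [hψ]
  have hψy : ψ y = 0 := by simp only [hψ]; linarith
  have hmid : ∀ u ∈ Icc x y, ∀ v ∈ Icc x y, (ψ u + ψ v) / 2 ≤ ψ ((u + v) / 2) := by
    intro u hu v hv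
    have := hm u (hsub hu) v (hsub hv)
    simp only [hψ]; linarith
  have hψ0 : ∀ u ∈ Icc x y, 0 ≤ ψ u := by
    obtain ⟨c, hcm, hcmin⟩ := isCompact_Icc.exists_isMinOn (nonempty_Icc.2 hxy.le) hψc
    have hcm' : ∀ u ∈ Icc x y, ψ c ≤ ψ u := fun u hu => hcmin hu
    by_contra! hneg
    obtain ⟨u, hu, hu0⟩ := hneg
    have hcneg : ψ c < 0 := (hcm' u hu).trans_lt hu0
    have hK : IsCompact (Icc x y ∩ ψ ⁻¹' {ψ c}) :=
      isCompact_Icc.of_isClosed_subset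
        (hψc.preimage_isClosed_of_isClosed isClosed_Icc isClosed_singleton) inter_subset_left
    obtain ⟨d, ⟨hdm, hde⟩, hdl⟩ := hK.exists_isLeast ⟨c, hcm, rfl⟩
    have hde : ψ d = ψ c := hde
    have hxd : x < d := lt_of_le_of_ne hdm.1 (by rintro rfl; linarith)
    have hdy : d < y := lt_of_le_of_ne hdm.2 (by rintro rfl; linarith)
    set δ := min (d - x) (y - d) with hδ
    have hδ0 : 0 < δ := lt_min (by linarith) (by linarith)
    have h1 : δ ≤ d - x := min_le_left _ _
    have h2 : δ ≤ y - d := min_le_right _ _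
    have hl : d - δ ∈ Icc x y := ⟨by linarith, by linarith⟩
    have hr : d + δ ∈ Icc x y := ⟨by linarith, by linarith⟩
    have hlt : ψ c < ψ (d - δ) := by
      refine lt_of_le_of_ne (hcm' _ hl) fun h => ?_
      have := hdl ⟨hl, h.symm⟩
      linarith
    have := hmid _ hl _ hr
    rw [show (d - δ + (d + δ)) / 2 = d by ring] at this
    linarith [hcm' _ hr]
  have hz : s * x + t * y ∈ Icc x y := by
    obtain rfl : s = 1 - t := by linarith
    constructor <;> nlinarith
  have := hψ0 _ hz
  simp only [hψ] at this
  obtain rfl : s = 1 - t := by linarith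
  have e : k * ((1 - t) * x + t * y - x) = t * (φ y - φ x) := by rw [← hkm]; ring
  rw [e] at this
  linarith

/-- A doubly concave function, positive at both endpoints, is concave in logarithmic coordinates. -/
theorem DoublyConcaveOn.concaveOn_log_comp_exp {f : ℝ → ℝ} {Ω : Set ℝ} (hf : DoublyConcaveOn f Ω)
    {x y : ℝ} (hx : x ∈ Ω) (hy : y ∈ Ω) (hx0 : 0 < x) (hxy : x < y) (hfx : 0 < f x)
    (hfy : 0 < f y) :
    ConcaveOn ℝ (Icc (Real.log x) (Real.log y)) (fun s => Real.log (f (Real.exp s))) := by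
  have hsub : Icc x y ⊆ Ω := hf.concaveOn.1.ordConnected.out hx hy
  have hy0 : 0 < y := hx0.trans hxy
  have hexp : MapsTo Real.exp (Icc (Real.log x) (Real.log y)) (Icc x y) := fun s hs =>
    ⟨(Real.log_le_iff_le_exp hx0).1 hs.1, (Real.le_log_iff_exp_le hy0).1 hs.2⟩
  have hposf : ∀ z ∈ Icc x y, 0 < f z := fun z hz =>
    (lt_min hfx hfy).trans_le <|
      hf.concaveOn.min_le_of_mem_Icc hx hy hz
  refine concaveOn_Icc_of_midpoint ?_ ?_
  · refine ContinuousOn.log ?_ fun s hs => (hposf _ (hexp hs)).ne'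
    exact (hf.continuousOn.mono hsub).comp Real.continuous_exp.continuousOn hexp
  · intro s hs t ht
    have h := hf.geomConcave _ (hsub (hexp hs)) _ (hsub (hexp ht))
    have h1 := hposf _ (hexp hs)
    have h2 := hposf _ (hexp ht)
    rw [← Real.exp_add, Real.sqrt_eq_rpow (Real.exp _), ← Real.exp_mul] at h
    have h3 := Real.log_le_log (Real.sqrt_pos.2 (mul_pos h1 h2)) h
    rw [Real.log_sqrt (mul_pos h1 h2).le, Real.log_mul h1.ne' h2.ne'] at h3
    rwa [show (s + t) / 2 = (s + t) * (1 / 2) by ring]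

/-- Two-point concavity of `t ↦ t ^ p`. -/
theorem add_rpow_le_rpow_add {p a b u v : ℝ} (hp0 : 0 ≤ p) (hp1 : p ≤ 1) (ha : 0 ≤ a) (hb : 0 ≤ b)
    (hab : a + b = 1) (hu : 0 ≤ u) (hv : 0 ≤ v) :
    a * u ^ p + b * v ^ p ≤ (a * u + b * v) ^ p :=
  (Real.concaveOn_rpow hp0 hp1).2 hu hv ha hb hab

/-- If `M` is at most the `p`-power mean of `u` and `v`, then shifting all three by `c ≥ 0`
keeps this relation. -/
theorem add_const_rpow_le_powerMean {p a b u v M c : ℝ} (hp0 : 0 < p) (hp1 : p ≤ 1) (ha : 0 ≤ a)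
    (hb : 0 ≤ b) (hab : a + b = 1) (hu : 0 ≤ u) (hv : 0 ≤ v) (hM : 0 ≤ M) (hc : 0 ≤ c)
    (h : M ^ p ≤ a * u ^ p + b * v ^ p) :
    (M + c) ^ p ≤ a * (u + c) ^ p + b * (v + c) ^ p := by
  rcases hM.eq_or_lt with rfl | hM
  · have h1 : c ^ p ≤ (u + c) ^ p := Real.rpow_le_rpow hc (by linarith) hp0.le
    have h2 : c ^ p ≤ (v + c) ^ p := Real.rpow_le_rpow hc (by linarith) hp0.le
    obtain rfl : a = 1 - b := by linarith
    rw [zero_add]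
    nlinarith
  · have hMc : 0 < M + c := by linarith
    set θ := M / (M + c) with hθ
    set η := c / (M + c) with hη
    have hθ0 : 0 ≤ θ := by positivity
    have hη0 : 0 ≤ η := by positivity
    have hsum : θ + η = 1 := by rw [hθ, hη]; field_simp
    have hMp : 0 < M ^ p := Real.rpow_pos_of_pos hM p
    have key : ∀ t, 0 ≤ t → (M + c) ^ p * (θ * (t ^ p / M ^ p) + η) ≤ (t + c) ^ p := by
      intro t ht
      have h1 := add_rpow_le_rpow_add hp0.le hp1 hθ0 hη0 hsum (div_nonneg ht hM.le) zero_le_one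
      rw [Real.one_rpow, mul_one, Real.div_rpow ht hM.le] at h1
      have h2 : t + c = (M + c) * (θ * (t / M) + η) := by rw [hθ, hη]; field_simp
      rw [h2, Real.mul_rpow hMc.le (by positivity)]
      exact mul_le_mul_of_nonneg_left h1 (by positivity)
    have hu' := mul_le_mul_of_nonneg_left (key u hu) ha
    have hv' := mul_le_mul_of_nonneg_left (key v hv) hb
    have h3 : 1 ≤ (a * u ^ p + b * v ^ p) / M ^ p := (one_le_div hMp).2 h
    have h4 : (M + c) ^ p ≤ (M + c) ^ p * (θ * ((a * u ^ p + b * v ^ p) / M ^ p) + η) :=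
      le_mul_of_one_le_right (by positivity) (by nlinarith)
    refine h4.trans ((le_of_eq ?_).trans (add_le_add hu' hv'))
    have hb' : b = 1 - a := by linarith
    subst hb'
    ring

/-- A doubly concave function is concave with respect to power means of exponent in `(0, 1]`. -/
theorem DoublyConcaveOn.le_map_powerMean_of_pos {f : ℝ → ℝ} {Ω : Set ℝ} (hf : DoublyConcaveOn f Ω)
    {p a b x y z : ℝ} (hp0 : 0 < p) (hp1 : p ≤ 1) (ha : 0 ≤ a) (hb : 0 ≤ b) (hab : a + b = 1)
    (hx : x ∈ Ω) (hy : y ∈ Ω) (hx0 : 0 < x) (hxy : x < y) (hz0 : 0 ≤ z)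
    (hz : z ^ p = a * x ^ p + b * y ^ p) :
    a * f x ^ p + b * f y ^ p ≤ f z ^ p := by
  have hy0 : 0 < y := hx0.trans hxy
  have hyx : 0 < y - x := by linarith
  have hfx := hf.nonneg x hx
  have hfy := hf.nonneg y hy
  have ha' : a = 1 - b := by linarith
  have hxyp : x ^ p ≤ y ^ p := Real.rpow_le_rpow hx0.le hxy.le hp0.le
  have hxz : x ≤ z := by
    rw [← Real.rpow_le_rpow_iff hx0.le hz0 hp0, hz, ha']; nlinarith
  have hzy : z ≤ y := by
    rw [← Real.rpow_le_rpow_iff hz0 hy0.le hp0, hz, ha']; nlinarith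
  have hzab : z ≤ a * x + b * y := by
    rw [← Real.rpow_le_rpow_iff hz0 (by positivity) hp0, hz]
    exact add_rpow_le_rpow_add hp0.le hp1 ha hb hab hx0.le hy0.le
  have hzΩ : z ∈ Ω := hf.concaveOn.1.ordConnected.out hx hy ⟨hxz, hzy⟩
  have hfz := hf.nonneg z hzΩ
  set l := (z - x) / (y - x) with hl
  have hlm : l * (y - x) = z - x := by rw [hl]; field_simp
  have hl0 : 0 ≤ l := div_nonneg (by linarith) hyx.le
  have hl1 : l ≤ 1 := (div_le_one hyx).2 (by linarith)
  have hconc : (1 - l) * f x + l * f y ≤ f z := by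
    have := hf.concaveOn.2 hx hy (sub_nonneg.2 hl1) hl0 (by ring)
    simp only [smul_eq_mul] at this
    rwa [show (1 - l) * x + l * y = z by linarith] at this
  rcases le_total (f y) (f x) with hdec | hinc
  · have hlb : l ≤ b := by
      rw [hl, div_le_iff₀ hyx]; rw [ha'] at hzab; linarith
    have h1 : a * f x + b * f y ≤ f z := by rw [ha']; nlinarith
    exact (add_rpow_le_rpow_add hp0.le hp1 ha hb hab hfx hfy).trans
      (Real.rpow_le_rpow (by positivity) h1 hp0.le)
  rcases le_total (f y * x) (f x * y) with hslow | hfast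
  · rcases hfx.eq_or_lt with hfx0 | hfx0
    · have : f y = 0 := by
        rw [← hfx0, zero_mul] at hslow
        exact le_antisymm (nonpos_of_mul_nonpos_left hslow hx0) hfy
      rw [← hfx0, this, Real.zero_rpow hp0.ne']
      simpa using Real.rpow_nonneg hfz p
    have hfy0 : 0 < f y := hfx0.trans_le hinc
    have hzpos : 0 < z := hx0.trans_le hxz
    have hfz0 : 0 < f z := (lt_min hfx0 hfy0).trans_le
      (hf.concaveOn.min_le_of_mem_Icc hx hy ⟨hxz, hzy⟩)
    have hlogr : 0 < Real.log (y / x) := Real.log_pos ((one_lt_div hx0).2 hxy)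
    set d := Real.log (f y / f x) / Real.log (y / x) with hd
    have hd0 : 0 ≤ d := div_nonneg (Real.log_nonneg ((one_le_div hfx0).2 hinc)) hlogr.le
    have hd1 : d ≤ 1 := by
      rw [hd, div_le_one hlogr]
      refine Real.log_le_log (by positivity) ?_
      rw [div_le_div_iff₀ hfx0 hx0]
      linarith
    have hs : f y = f x * (y / x) ^ d := by
      rw [Real.rpow_def_of_pos (by positivity), hd, mul_div_cancel₀ _ hlogr.ne',
        Real.exp_log (by positivity)]
      field_simp
    have hgeo : f x * (z / x) ^ d ≤ f z := by
      have hφ := hf.concaveOn_log_comp_exp hx hy hx0 hxy hfx0 hfy0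
      set μ := Real.log (z / x) / Real.log (y / x) with hμ
      have hμm : μ * Real.log (y / x) = Real.log (z / x) := by rw [hμ]; field_simp
      have hμ0 : 0 ≤ μ := div_nonneg (Real.log_nonneg ((one_le_div hx0).2 hxz)) hlogr.le
      have hμ1 : μ ≤ 1 := (div_le_one hlogr).2 (Real.log_le_log (by positivity) (by gcongr))
      have hlxy : Real.log x ≤ Real.log y := Real.log_le_log hx0 hxy.le
      have h1 := hφ.2 (left_mem_Icc.2 hlxy) (right_mem_Icc.2 hlxy) (sub_nonneg.2 hμ1) hμ0 (by ring)
      have h2 : (1 - μ) * Real.log x + μ * Real.log y = Real.log z := by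
        rw [Real.log_div hy0.ne' hx0.ne', Real.log_div hzpos.ne' hx0.ne'] at hμm
        linarith
      simp only [smul_eq_mul] at h1
      rw [h2, Real.exp_log hx0, Real.exp_log hy0, Real.exp_log hzpos] at h1
      rw [← Real.log_le_log_iff (by positivity) hfz0, Real.log_mul hfx0.ne' (by positivity),
        Real.log_rpow (by positivity)]
      have h3 : d * Real.log (z / x) = μ * (Real.log (f y) - Real.log (f x)) := by
        rw [← Real.log_div hfy0.ne' hfx0.ne', hd, hμ]; ring
      linarith
    have hzx : (z / x) ^ p = a * 1 + b * (y / x) ^ p := by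
      rw [Real.div_rpow hz0 hx0.le, hz, Real.div_rpow hy0.le hx0.le]
      field_simp
    have hcomm : ∀ t : ℝ, 0 ≤ t → (f x * t ^ d) ^ p = f x ^ p * (t ^ p) ^ d := fun t ht => by
      rw [Real.mul_rpow hfx (by positivity), ← Real.rpow_mul ht, ← Real.rpow_mul ht, mul_comm d p]
    calc a * f x ^ p + b * f y ^ p
        = f x ^ p * (a * 1 ^ d + b * ((y / x) ^ p) ^ d) := by
          rw [Real.one_rpow]
          nth_rewrite 1 [hs]
          rw [hcomm _ (by positivity)]; ring
      _ ≤ f x ^ p * ((z / x) ^ p) ^ d := by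
          rw [hzx]
          exact mul_le_mul_of_nonneg_left
            (add_rpow_le_rpow_add hd0 hd1 ha hb hab zero_le_one (by positivity)) (by positivity)
      _ = (f x * (z / x) ^ d) ^ p := (hcomm _ (by positivity)).symm
      _ ≤ f z ^ p := Real.rpow_le_rpow (by positivity) hgeo hp0.le
  · set k := (f y - f x) / (y - x) with hk
    have hk0 : 0 ≤ k := div_nonneg (by linarith) hyx.le
    have hkm : k * (y - x) = f y - f x := by rw [hk]; field_simp
    set c := k * x - f x with hc
    have hc0 : 0 ≤ c := by
      have : c * (y - x) = f y * x - f x * y := by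
        rw [hc, sub_mul, mul_right_comm, hkm]; ring
      nlinarith
    have hkz : k * z ≤ f z + c := by
      have : k * (z - x) = l * (f y - f x) := by rw [← hlm, ← hkm]; ring
      rw [hc]; linarith
    set M := (a * f x ^ p + b * f y ^ p) ^ (1 / p) with hMdef
    have hW : 0 ≤ a * f x ^ p + b * f y ^ p := by positivity
    have hM0 : 0 ≤ M := by positivity
    have hMp : M ^ p = a * f x ^ p + b * f y ^ p := by
      rw [hMdef, ← Real.rpow_mul hW, one_div_mul_cancel hp0.ne', Real.rpow_one]
    have h1 := add_const_rpow_le_powerMean hp0 hp1 ha hb hab hfx hfy hM0 hc0 hMp.le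
    have e1 : f x + c = k * x := by rw [hc]; ring
    have e2 : f y + c = k * y := by rw [hc]; linarith
    have h2 : a * (f x + c) ^ p + b * (f y + c) ^ p = (k * z) ^ p := by
      rw [e1, e2, Real.mul_rpow hk0 hx0.le, Real.mul_rpow hk0 hy0.le, Real.mul_rpow hk0 hz0, hz]
      ring
    rw [h2, Real.rpow_le_rpow_iff (by positivity) (by positivity) hp0] at h1
    rw [← hMp]
    exact Real.rpow_le_rpow hM0 (by linarith) hp0.le

/-- The nonnegative numbers whose `r`-th power lies in a convex set form a convex set. -/
theorem convex_setOf_rpow_mem {Ω : Set ℝ} (hΩ : Convex ℝ Ω) {r : ℝ} (hr : 0 ≤ r) :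
    Convex ℝ {t : ℝ | 0 ≤ t ∧ t ^ r ∈ Ω} := by
  refine OrdConnected.convex ⟨fun s hs t ht u hu => ?_⟩
  have hu0 : 0 ≤ u := hs.1.trans hu.1
  exact ⟨hu0, hΩ.ordConnected.out hs.2 ht.2
    ⟨Real.rpow_le_rpow hs.1 hu.1 hr, Real.rpow_le_rpow hu0 hu.2 hr⟩⟩

/-- If `f` is doubly concave and `0 < p ≤ 1`, then `t ↦ f (t ^ (1 / p)) ^ p` is concave. -/
theorem DoublyConcaveOn.concaveOn_rpow_comp_rpow {f : ℝ → ℝ} {Ω : Set ℝ}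
    (hf : DoublyConcaveOn f Ω) {p : ℝ} (hp0 : 0 < p) (hp1 : p ≤ 1) :
    ConcaveOn ℝ {t : ℝ | 0 ≤ t ∧ t ^ (1 / p) ∈ Ω} (fun t => f (t ^ (1 / p)) ^ p) := by
  have hr : 0 < 1 / p := by positivity
  have hS := convex_setOf_rpow_mem hf.concaveOn.1 hr.le
  have hinv : ∀ t : ℝ, 0 ≤ t → (t ^ (1 / p)) ^ p = t := fun t ht => by
    rw [← Real.rpow_mul ht, one_div_mul_cancel hp0.ne', Real.rpow_one]
  have hpos : ∀ x y a b : ℝ, (0 ≤ x ∧ x ^ (1 / p) ∈ Ω) → (0 ≤ y ∧ y ^ (1 / p) ∈ Ω) → 0 < x → x < y →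
      0 ≤ a → 0 ≤ b → a + b = 1 →
      a * f (x ^ (1 / p)) ^ p + b * f (y ^ (1 / p)) ^ p ≤ f ((a * x + b * y) ^ (1 / p)) ^ p := by
    intro x y a b hx hy hx0 hxy ha hb hab
    have hz : 0 ≤ a * x + b * y := add_nonneg (mul_nonneg ha hx.1) (mul_nonneg hb hy.1)
    refine hf.le_map_powerMean_of_pos hp0 hp1 ha hb hab hx.2 hy.2 (by positivity)
      (Real.rpow_lt_rpow hx.1 hxy hr) (by positivity) ?_
    rw [hinv _ hz, hinv _ hx.1, hinv _ hy.1]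
  refine LinearOrder.concaveOn_of_lt hS ?_
  intro x hx y hy hxy a b ha hb hab
  simp only [smul_eq_mul]
  rcases hx.1.eq_or_lt with rfl | hx0
  · have hg : ContinuousOn (fun t => f (t ^ (1 / p)) ^ p) {t : ℝ | 0 ≤ t ∧ t ^ (1 / p) ∈ Ω} := by
      refine ContinuousOn.rpow_const (hf.continuousOn.comp ?_ fun t ht => ht.2)
        fun _ _ => Or.inr hp0.le
      exact (Real.continuous_rpow_const hr.le).continuousOn
    have hmem : ∀ ε ∈ Ioo 0 y, ε ∈ {t : ℝ | 0 ≤ t ∧ t ^ (1 / p) ∈ Ω} := fun ε hε =>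
      hS.ordConnected.out hx hy ⟨hε.1.le, hε.2.le⟩
    have hev : ∀ᶠ ε in 𝓝[>] (0 : ℝ), ε ∈ Ioo 0 y := Ioo_mem_nhdsGT hxy
    have hid : Tendsto (fun ε : ℝ => ε) (𝓝[>] 0) (𝓝 0) :=
      tendsto_nhdsWithin_of_tendsto_nhds tendsto_id
    have hl : Tendsto (fun ε : ℝ => a * f (ε ^ (1 / p)) ^ p + b * f (y ^ (1 / p)) ^ p) (𝓝[>] 0)
        (𝓝 (a * f ((0 : ℝ) ^ (1 / p)) ^ p + b * f (y ^ (1 / p)) ^ p)) := by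
      refine (Tendsto.const_mul a ?_).add_const _
      exact (hg 0 hx).tendsto.comp
        (tendsto_nhdsWithin_iff.2 ⟨hid, hev.mono hmem⟩)
    have hrt : Tendsto (fun ε : ℝ => f ((a * ε + b * y) ^ (1 / p)) ^ p) (𝓝[>] 0)
        (𝓝 (f ((a * 0 + b * y) ^ (1 / p)) ^ p)) := by
      refine (hg _ (hS hx hy ha.le hb.le hab)).tendsto.comp (tendsto_nhdsWithin_iff.2 ⟨?_, ?_⟩)
      · exact (hid.const_mul a).add_const _
      · exact hev.mono fun ε hε => hS (hmem ε hε) hy ha.le hb.le hab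
    exact le_of_tendsto_of_tendsto hl hrt
      (hev.mono fun ε hε => hpos ε y a b (hmem ε hε) hy hε.1 hε.2 ha.le hb.le hab)
  · exact hpos x y a b hx hy hx0 hxy ha.le hb.le hab

end PowerMeans

open Matrix in
/-- The real part of the quadratic form of a matrix. -/
noncomputable def reQuad {m : ℕ} (M : Matrix (Fin m) (Fin m) ℂ) (h : Fin m → ℂ) : ℝ :=
  (star h ⬝ᵥ M *ᵥ h).re

namespace Matrix

theorem cfc_comp_real {m : ℕ} {A : Matrix (Fin m) (Fin m) ℂ} (hA : A.IsHermitian) (g f : ℝ → ℝ) :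
    cfc g (cfc f A) = cfc (fun x => g (f x)) A :=
  (cfc_comp' g f A ((A.finite_real_spectrum.image f).continuousOn g)
    (A.finite_real_spectrum.continuousOn f) hA).symm

theorem mul_diagonal_mul_star_eq_sum {m : ℕ} (U : Matrix (Fin m) (Fin m) ℂ) (d : Fin m → ℂ) :
    U * diagonal d * star U = ∑ i, d i • vecMulVec (U.col i) (star (U.col i)) := by
  ext k l
  rw [mul_apply, sum_apply]
  simp only [mul_diagonal, star_apply, smul_apply, vecMulVec_apply, Pi.star_apply, col_apply,
    smul_eq_mul]
  exact Finset.sum_congr rfl fun i _ => by ring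

theorem IsHermitian.cfc_eq_mul_diagonal_mul_star {m : ℕ} {A : Matrix (Fin m) (Fin m) ℂ}
    (hA : A.IsHermitian) (F : ℝ → ℝ) :
    cfc F A = (hA.eigenvectorUnitary : Matrix (Fin m) (Fin m) ℂ) *
      diagonal (fun i => (F (hA.eigenvalues i) : ℂ)) *
      star (hA.eigenvectorUnitary : Matrix (Fin m) (Fin m) ℂ) := by
  rw [hA.cfc_eq, IsHermitian.cfc, Unitary.conjStarAlgAut_apply]
  rfl

/-- The functional calculus of a Hermitian matrix in an eigenbasis with prescribed ordering. -/
theorem IsHermitian.exists_unitary_cfc_eq {m : ℕ} {A : Matrix (Fin m) (Fin m) ℂ}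
    (hA : A.IsHermitian) (σ : Equiv.Perm (Fin m)) :
    ∃ U ∈ unitaryGroup (Fin m) ℂ, ∀ F : ℝ → ℝ,
      cfc F A = U * diagonal (fun i => (F (hA.eigenvalues (σ i)) : ℂ)) * star U := by
  set U₀ : Matrix (Fin m) (Fin m) ℂ := (hA.eigenvectorUnitary).1
  have hU : star U₀ * U₀ = 1 := mem_unitaryGroup_iff'.1 hA.eigenvectorUnitary.2
  refine ⟨U₀.submatrix id σ, mem_unitaryGroup_iff'.2 ?_, fun F => ?_⟩
  · have : star (U₀.submatrix id σ) * U₀.submatrix id σ = (star U₀ * U₀).submatrix σ σ := by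
      ext k l
      simp [mul_apply]
    rw [this, hU, submatrix_one_equiv]
  · rw [hA.cfc_eq_mul_diagonal_mul_star, mul_diagonal_mul_star_eq_sum, mul_diagonal_mul_star_eq_sum,
      ← Equiv.sum_comp σ]
    rfl

theorem posSemidef_mul_diagonal_mul_star {m : ℕ} (U : Matrix (Fin m) (Fin m) ℂ) {d : Fin m → ℝ}
    (hd : ∀ i, 0 ≤ d i) : (U * diagonal (fun i => (d i : ℂ)) * star U).PosSemidef :=
  (PosSemidef.diagonal (d := fun i => (d i : ℂ)) fun i => by
    simpa using hd i).mul_mul_conjTranspose_same U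

theorem IsHermitian.posSemidef_cfc_s2 {m : ℕ} {A : Matrix (Fin m) (Fin m) ℂ}
    (hA : A.IsHermitian) {F : ℝ → ℝ} (hF : ∀ x ∈ spectrum ℝ A, 0 ≤ F x) : (cfc F A).PosSemidef := by
  rw [hA.cfc_eq_mul_diagonal_mul_star]
  exact posSemidef_mul_diagonal_mul_star _ fun i => hF _ (hA.eigenvalues_mem_spectrum_real i)

theorem reQuad_mul_diagonal_mul_star {m : ℕ} (U : Matrix (Fin m) (Fin m) ℂ) (d : Fin m → ℝ)
    (h : Fin m → ℂ) :
    reQuad (U * diagonal (fun i => (d i : ℂ)) * star U) h =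
      ∑ i, d i * ‖(star U *ᵥ h) i‖ ^ 2 := by
  have e : star h ᵥ* U = star (star U *ᵥ h) := by
    rw [star_mulVec, star_eq_conjTranspose, conjTranspose_conjTranspose]
  rw [reQuad, ← mulVec_mulVec, ← mulVec_mulVec, dotProduct_mulVec, e, dotProduct, Complex.re_sum]
  refine Finset.sum_congr rfl fun i _ => ?_
  rw [mulVec_diagonal, Pi.star_apply, mul_left_comm, RCLike.star_def, Complex.conj_mul']
  norm_cast

theorem sum_norm_sq_star_mulVec {m : ℕ} {U : Matrix (Fin m) (Fin m) ℂ}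
    (hU : U ∈ unitaryGroup (Fin m) ℂ) {h : Fin m → ℂ} (hh : reQuad 1 h = 1) :
    ∑ i, ‖(star U *ᵥ h) i‖ ^ 2 = 1 := by
  have := reQuad_mul_diagonal_mul_star U (fun _ => 1) h
  simp only [Complex.ofReal_one, diagonal_one, mul_one, one_mul] at this
  rw [← this, mem_unitaryGroup_iff.1 hU, hh]

/-- Complementary spans of initial and final parts of two bases share a unit vector. -/
theorem exists_unit_star_mulVec_eq_zero {m : ℕ} (U W : Matrix (Fin m) (Fin m) ℂ) (j : Fin m) :
    ∃ h : Fin m → ℂ, reQuad 1 h = 1 ∧ (∀ i, j < i → (star U *ᵥ h) i = 0) ∧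
      ∀ i, i < j → (star W *ᵥ h) i = 0 := by
  let L : (Fin m → ℂ) →ₗ[ℂ] ({i : Fin m // i ≠ j} → ℂ) :=
    LinearMap.pi fun i => if j < i.1 then LinearMap.proj i.1 ∘ₗ (star U).mulVecLin
      else LinearMap.proj i.1 ∘ₗ (star W).mulVecLin
  have hker : LinearMap.ker L ≠ ⊥ := L.ker_ne_bot_of_finrank_lt <| by
    rw [Module.finrank_fintype_fun_eq_card, Module.finrank_fintype_fun_eq_card]
    exact Fintype.card_subtype_lt (x := j) (by simp)
  obtain ⟨v, hv, hv0⟩ := Submodule.exists_mem_ne_zero_of_ne_bot hker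
  have hLi : ∀ i (hi : i ≠ j), L v ⟨i, hi⟩ = 0 := fun i hi => by
    rw [LinearMap.mem_ker.1 hv]; rfl
  have hq : ∀ u : Fin m → ℂ, reQuad 1 u = ∑ i, ‖u i‖ ^ 2 := fun u => by
    simpa using reQuad_mul_diagonal_mul_star 1 (fun _ => 1) u
  have hpos : 0 < reQuad 1 v := by
    rw [hq]
    obtain ⟨i, hi⟩ := Function.ne_iff.1 hv0
    exact Finset.sum_pos' (fun _ _ => by positivity)
      ⟨i, Finset.mem_univ i, pow_pos (norm_pos_iff.2 hi) 2⟩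
  refine ⟨((Real.sqrt (reQuad 1 v))⁻¹ : ℂ) • v, ?_, fun i hi => ?_, fun i hi => ?_⟩
  · rw [hq]
    simp only [Pi.smul_apply, norm_smul, mul_pow, ← Finset.mul_sum, ← hq, norm_inv,
      Complex.norm_real, Real.norm_eq_abs, sq_abs, inv_pow, Real.sq_sqrt hpos.le]
    exact inv_mul_cancel₀ hpos.ne'
  · have := hLi i hi.ne'
    simp only [L, LinearMap.pi_apply, if_pos hi] at this
    rw [mulVec_smul, Pi.smul_apply, show (star U *ᵥ v) i = 0 from this, smul_zero]
  · have := hLi i hi.ne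
    simp only [L, LinearMap.pi_apply, if_neg hi.not_gt] at this
    rw [mulVec_smul, Pi.smul_apply, show (star W *ᵥ v) i = 0 from this, smul_zero]

theorem sum_mul_le_of_sum_eq_one {m : ℕ} {d w : Fin m → ℝ} {t : ℝ} (hw : ∀ i, 0 ≤ w i)
    (hsum : ∑ i, w i = 1) (h : ∀ i, w i ≠ 0 → d i ≤ t) : ∑ i, d i * w i ≤ t := by
  calc ∑ i, d i * w i ≤ ∑ i, t * w i := Finset.sum_le_sum fun i _ => by
        by_cases hi : w i = 0
        · simp [hi]
        · exact mul_le_mul_of_nonneg_right (h i hi) (hw i)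
    _ = t := by rw [← Finset.mul_sum, hsum, mul_one]

theorem le_sum_mul_of_sum_eq_one {m : ℕ} {d w : Fin m → ℝ} {t : ℝ} (hw : ∀ i, 0 ≤ w i)
    (hsum : ∑ i, w i = 1) (h : ∀ i, w i ≠ 0 → t ≤ d i) : t ≤ ∑ i, d i * w i := by
  have := sum_mul_le_of_sum_eq_one (d := fun i => -d i) (t := -t) hw hsum
    fun i hi => neg_le_neg (h i hi)
  simp only [neg_mul, Finset.sum_neg_distrib] at this
  linarith

/-- If the quadratic form of `C` is dominated by a monotone or antitone function `g` of that of `B`,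
then the increasingly ordered eigenvalues of `C` are dominated by those of `g B`. -/
theorem eigenvalue_le_of_reQuad_le {m : ℕ} {U W : Matrix (Fin m) (Fin m) ℂ}
    (hU : U ∈ unitaryGroup (Fin m) ℂ) (hW : W ∈ unitaryGroup (Fin m) ℂ) {β γ : Fin m → ℝ}
    {S : Set ℝ} {g : ℝ → ℝ}
    (hS : ∀ h, reQuad 1 h = 1 → reQuad (U * diagonal (fun i => (β i : ℂ)) * star U) h ∈ S)
    (hle : ∀ h, reQuad 1 h = 1 → reQuad (W * diagonal (fun i => (γ i : ℂ)) * star W) h ≤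
      g (reQuad (U * diagonal (fun i => (β i : ℂ)) * star U) h))
    (hγ : Monotone γ) (hβ : (Monotone β ∧ MonotoneOn g S) ∨ (Antitone β ∧ AntitoneOn g S))
    (j : Fin m) : β j ∈ S ∧ γ j ≤ g (β j) := by
  have hsupp : ∀ {X : Matrix (Fin m) (Fin m) ℂ} {h : Fin m → ℂ} {i : Fin m},
      ‖(star X *ᵥ h) i‖ ^ 2 ≠ 0 → (star X *ᵥ h) i ≠ 0 := fun hi h0 => hi (by simp [h0])
  have hβS : β j ∈ S := by
    obtain ⟨h, h1, h2, h3⟩ := exists_unit_star_mulVec_eq_zero U U j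
    have hj : ∀ i, ‖(star U *ᵥ h) i‖ ^ 2 ≠ 0 → i = j := fun i hi =>
      le_antisymm (not_lt.1 fun hlt => hsupp hi (h2 i hlt))
        (not_lt.1 fun hlt => hsupp hi (h3 i hlt))
    have hs := hS h h1
    have hsum := sum_norm_sq_star_mulVec hU h1
    rw [reQuad_mul_diagonal_mul_star] at hs
    rwa [le_antisymm
      (sum_mul_le_of_sum_eq_one (fun _ => by positivity) hsum
        fun i hi => (congrArg β (hj i hi)).le)
      (le_sum_mul_of_sum_eq_one (fun _ => by positivity) hsum
        fun i hi => (congrArg β (hj i hi)).ge)] at hs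
  refine ⟨hβS, ?_⟩
  obtain ⟨h, h1, h2, h3⟩ := exists_unit_star_mulVec_eq_zero U W j
  have hs := hS h h1
  have hl := hle h h1
  have hUi : ∀ i, ‖(star U *ᵥ h) i‖ ^ 2 ≠ 0 → i ≤ j := fun i hi =>
    not_lt.1 fun hlt => hsupp hi (h2 i hlt)
  have hWi : ∀ i, ‖(star W *ᵥ h) i‖ ^ 2 ≠ 0 → j ≤ i := fun i hi =>
    not_lt.1 fun hlt => hsupp hi (h3 i hlt)
  rw [reQuad_mul_diagonal_mul_star] at hs
  rw [reQuad_mul_diagonal_mul_star, reQuad_mul_diagonal_mul_star] at hl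
  have hUsum := sum_norm_sq_star_mulVec hU h1
  refine (le_sum_mul_of_sum_eq_one (fun _ => by positivity) (sum_norm_sq_star_mulVec hW h1)
    fun i hi => hγ (hWi i hi)).trans (hl.trans ?_)
  rcases hβ with ⟨hβ, hg⟩ | ⟨hβ, hg⟩
  · exact hg hs hβS (sum_mul_le_of_sum_eq_one (fun _ => by positivity) hUsum
      fun i hi => hβ (hUi i hi))
  · exact hg hβS hs (le_sum_mul_of_sum_eq_one (fun _ => by positivity) hUsum
      fun i hi => hβ (hUi i hi))

/-- A unital positive map turns the functional calculus of `Z`, tested on a unit vector, into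
integration against a probability on the eigenvalues of `Z`. -/
theorem IsHermitian.exists_weights_reQuad_map_cfc {n m : ℕ}
    (E : Matrix (Fin n) (Fin n) ℂ →ₗ[ℂ] Matrix (Fin m) (Fin m) ℂ)
    (hpos : ∀ A : Matrix (Fin n) (Fin n) ℂ, A.PosSemidef → (E A).PosSemidef) (hunital : E 1 = 1)
    {Z : Matrix (Fin n) (Fin n) ℂ} (hZ : Z.IsHermitian) {h : Fin m → ℂ} (hh : reQuad 1 h = 1) :
    ∃ w : Fin n → ℝ, (∀ i, 0 ≤ w i) ∧ ∑ i, w i = 1 ∧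
      ∀ F : ℝ → ℝ, reQuad (E (cfc F Z)) h = ∑ i, w i • F (hZ.eigenvalues i) := by
  set U : Matrix (Fin n) (Fin n) ℂ := (hZ.eigenvectorUnitary).1
  set w : Fin n → ℝ := fun i => reQuad (E (vecMulVec (U.col i) (star (U.col i)))) h with hw
  have key : ∀ F : ℝ → ℝ, reQuad (E (cfc F Z)) h = ∑ i, w i • F (hZ.eigenvalues i) := by
    intro F
    rw [hZ.cfc_eq_mul_diagonal_mul_star, mul_diagonal_mul_star_eq_sum, map_sum, reQuad, sum_mulVec,
      dotProduct_sum, Complex.re_sum]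
    refine Finset.sum_congr rfl fun i _ => ?_
    rw [map_smul, smul_mulVec, dotProduct_smul, smul_eq_mul, Complex.re_ofReal_mul, smul_eq_mul,
      mul_comm]
    rfl
  refine ⟨w, fun i => ?_, ?_, key⟩
  · exact (hpos _ (posSemidef_vecMulVec_self_star _)).re_dotProduct_nonneg h
  · have := key fun _ => 1
    rw [cfc_const_one ℝ Z hZ.isSelfAdjoint, hunital, hh] at this
    simpa using this.symm

end Matrix

theorem stmt_2 {n m : ℕ} (E : Matrix (Fin n) (Fin n) ℂ →ₗ[ℂ] Matrix (Fin m) (Fin m) ℂ)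
    (hpos : ∀ A : Matrix (Fin n) (Fin n) ℂ, A.PosSemidef → (E A).PosSemidef)
    (hunital : E 1 = 1)
    (f : ℝ → ℝ) (Ω : Set ℝ) (hf : DoublyConcaveOn f Ω)
    (hmono : MonotoneOn f Ω ∨ AntitoneOn f Ω)
    (Z : Matrix (Fin n) (Fin n) ℂ) (hZ : Z.IsHermitian) (hΩ : spectrum ℝ Z ⊆ Ω)
    (p : ℝ) (hp0 : 0 < p) (hp1 : p ≤ 1) :
    ∃ V ∈ Matrix.unitaryGroup (Fin m) ℂ,
      (cfc f (Ep E p Z) - V * Ep E p (cfc f Z) * star V).PosSemidef := by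
  set r : ℝ := 1 / p with hr
  have hr0 : 0 < r := by positivity
  set S : Set ℝ := {t : ℝ | 0 ≤ t ∧ t ^ r ∈ Ω} with hS
  set g : ℝ → ℝ := fun t => f (t ^ r) ^ p with hg
  have hgc : ConcaveOn ℝ S g := hf.concaveOn_rpow_comp_rpow hp0 hp1
  have hlam : ∀ i, hZ.eigenvalues i ∈ Ω := fun i => hΩ (hZ.eigenvalues_mem_spectrum_real i)
  have hinv : ∀ x ∈ Ω, (x ^ p) ^ r = x := fun x hx => by
    rw [← Real.rpow_mul (hf.subset_Ici hx), hr, mul_one_div_cancel hp0.ne', Real.rpow_one]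
  have hlamS : ∀ i, hZ.eigenvalues i ^ p ∈ S := fun i =>
    ⟨Real.rpow_nonneg (hf.subset_Ici (hlam i)) p, by rw [hinv _ (hlam i)]; exact hlam i⟩
  set B := E (cfc (fun x : ℝ => x ^ p) Z) with hBdef
  set C := E (cfc (fun x : ℝ => f x ^ p) Z) with hCdef
  have hB : B.PosSemidef := hpos _ <| hZ.posSemidef_cfc_s2 fun x hx =>
    Real.rpow_nonneg (hf.subset_Ici (hΩ hx)) p
  have hC : C.PosSemidef := hpos _ <| hZ.posSemidef_cfc_s2 fun x hx =>
    Real.rpow_nonneg (hf.nonneg x (hΩ hx)) p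
  have hquad : ∀ h, reQuad 1 h = 1 → reQuad B h ∈ S ∧ reQuad C h ≤ g (reQuad B h) := by
    intro h hh
    obtain ⟨w, hw0, hw1, hw⟩ := hZ.exists_weights_reQuad_map_cfc E hpos hunital hh
    rw [hBdef, hCdef, hw, hw]
    refine ⟨hgc.1.sum_mem (fun i _ => hw0 i) hw1 fun i _ => hlamS i, ?_⟩
    refine le_trans (le_of_eq ?_) (hgc.le_map_sum (fun i _ => hw0 i) hw1 fun i _ => hlamS i)
    exact Finset.sum_congr rfl fun i _ => by rw [hg]; simp only [hinv _ (hlam i)]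
  obtain ⟨σ, hσ⟩ : ∃ σ : Equiv.Perm (Fin m),
      (Monotone (fun i => hB.1.eigenvalues (σ i)) ∧ MonotoneOn g S) ∨
      (Antitone (fun i => hB.1.eigenvalues (σ i)) ∧ AntitoneOn g S) := by
    rcases hmono with hmono | hanti
    · refine ⟨Tuple.sort hB.1.eigenvalues, Or.inl
        ⟨fun i j hij => Tuple.monotone_sort hB.1.eigenvalues hij, ?_⟩⟩
      intro s hs t ht hst
      exact Real.rpow_le_rpow (hf.nonneg _ hs.2)
        (hmono hs.2 ht.2 (Real.rpow_le_rpow hs.1 hst hr0.le)) hp0.le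
    · refine ⟨Fin.revPerm.trans (Tuple.sort hB.1.eigenvalues), Or.inr ⟨?_, ?_⟩⟩
      · exact fun i j hij => Tuple.monotone_sort hB.1.eigenvalues (Fin.rev_le_rev.2 hij)
      · intro s hs t ht hst
        exact Real.rpow_le_rpow (hf.nonneg _ ht.2)
          (hanti hs.2 ht.2 (Real.rpow_le_rpow hs.1 hst hr0.le)) hp0.le
  set τ := Tuple.sort hC.1.eigenvalues
  obtain ⟨U, hU, hUF⟩ := hB.1.exists_unitary_cfc_eq σ
  obtain ⟨W, hW, hWF⟩ := hC.1.exists_unitary_cfc_eq τ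
  have hBU := hUF fun x => x
  have hCW := hWF fun x => x
  rw [cfc_id' ℝ B hB.1.isSelfAdjoint] at hBU
  rw [cfc_id' ℝ C hC.1.isSelfAdjoint] at hCW
  have hcmp := Matrix.eigenvalue_le_of_reQuad_le hU hW (S := S) (g := g)
    (fun h hh => hBU ▸ (hquad h hh).1) (fun h hh => hBU ▸ hCW ▸ (hquad h hh).2)
    (Tuple.monotone_sort hC.1.eigenvalues) hσ
  have hWW : star W * W = 1 := Matrix.mem_unitaryGroup_iff'.1 hW
  refine ⟨U * star W, mul_mem hU (Unitary.star_mem hW), ?_⟩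
  have hL : cfc f (Ep E p Z) = U * Matrix.diagonal
      (fun i => (f (hB.1.eigenvalues (σ i) ^ r) : ℂ)) * star U := by
    rw [Ep, Matrix.cfc_comp_real hB.1]
    exact hUF fun x => f (x ^ r)
  have hR : U * star W * Ep E p (cfc f Z) * star (U * star W) = U * Matrix.diagonal
      (fun i => ((hC.1.eigenvalues (τ i) ^ r : ℝ) : ℂ)) * star U := by
    rw [Ep, Matrix.cfc_comp_real hZ, hWF, star_mul, star_star]
    calc _ = U * (star W * W) * _ * (star W * W) * star U := by simp only [mul_assoc]; rfl
      _ = _ := by rw [hWW, mul_one, mul_one]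
  rw [hL, hR, ← sub_mul, ← mul_sub, Matrix.diagonal_sub]
  simp only [← Complex.ofReal_sub]
  refine Matrix.posSemidef_mul_diagonal_mul_star U fun i => sub_nonneg.2 ?_
  obtain ⟨hβ, hγ⟩ := hcmp i
  calc hC.1.eigenvalues (τ i) ^ r ≤ g (hB.1.eigenvalues (σ i)) ^ r :=
        Real.rpow_le_rpow (hC.eigenvalues_nonneg _) hγ hr0.le
    _ = f (hB.1.eigenvalues (σ i) ^ r) := by
        rw [hg, hr, ← Real.rpow_mul (hf.nonneg _ hβ.2), mul_one_div_cancel hp0.ne', Real.rpow_one]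
end

section
/- Let f be a doubly concave function on [0,∞), let A, B be n×n positive semidefinite complex matrices, and let p ∈ (0,1]. Then there exists a unitary V ∈ M_n(ℂ) such that f(A β_p B) ≥ V (f(A) β_p f(B)) V* in the positive semidefinite (Loewner) order. -/
open scoped ComplexOrder

/-- A continuous midpoint-concave function on the real line is concave. -/
theorem concaveOn_univ_of_midpoint {φ : ℝ → ℝ} (hc : Continuous φ)
    (h : ∀ x y, (φ x + φ y) / 2 ≤ φ ((x + y) / 2)) : ConcaveOn ℝ Set.univ φ := by
  refine LinearOrder.concaveOn_of_lt convex_univ ?_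
  intro x _ y _ hxy a b ha hb hab
  simp only [smul_eq_mul]
  by_contra! hlt
  set k : ℝ := (φ y - φ x) / (y - x)
  have hky : k * (y - x) = φ y - φ x := div_mul_cancel₀ _ (sub_ne_zero.2 hxy.ne')
  set ψ : ℝ → ℝ := fun z => φ z - (φ x + k * (z - x)) with hψ
  have hψc : Continuous ψ := by fun_prop
  have hψx : ψ x = 0 := by simp [hψ]
  have hψy : ψ y = 0 := by simp only [hψ]; linarith
  have hmid : ∀ u v, (ψ u + ψ v) / 2 ≤ ψ ((u + v) / 2) := by
    intro u v
    have := h u v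
    simp only [hψ]
    linarith
  have hz0 : ψ (a * x + b * y) < 0 := by
    have ha' : a = 1 - b := by linarith
    have e : a * x + b * y - x = b * (y - x) := by rw [ha']; ring
    have e2 : k * (b * (y - x)) = b * (φ y - φ x) := by rw [← hky]; ring
    simp only [hψ, e, e2]
    rw [ha'] at hlt ⊢
    linarith
  have hz0m : a * x + b * y ∈ Set.Icc x y := by
    have ha' : a = 1 - b := by linarith
    subst ha'
    constructor <;> nlinarith
  obtain ⟨m, hm, hmin⟩ := isCompact_Icc.exists_isMinOn ⟨_, hz0m⟩ hψc.continuousOn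
  have hS : IsCompact (Set.Icc x y ∩ ψ ⁻¹' {ψ m}) :=
    isCompact_Icc.inter_right (isClosed_singleton.preimage hψc)
  obtain ⟨z, ⟨hz, hzm⟩, hzl⟩ := hS.exists_isLeast ⟨m, hm, rfl⟩
  have hzm : ψ z = ψ m := hzm
  have hneg : ψ z < 0 := hzm ▸ (hmin hz0m).trans_lt hz0
  have hxz : x < z := lt_of_le_of_ne hz.1 (by rintro rfl; linarith)
  have hzy : z < y := lt_of_le_of_ne hz.2 (by rintro rfl; linarith)
  obtain ⟨δ, hδ, hδ1, hδ2⟩ : ∃ δ, 0 < δ ∧ δ ≤ z - x ∧ δ ≤ y - z :=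
    ⟨min (z - x) (y - z), lt_min (by linarith) (by linarith), min_le_left _ _, min_le_right _ _⟩
  have hl : z - δ ∈ Set.Icc x y := ⟨by linarith, by linarith⟩
  have hr : z + δ ∈ Set.Icc x y := ⟨by linarith, by linarith⟩
  have h1 : ψ z < ψ (z - δ) := by
    refine lt_of_le_of_ne (hzm ▸ hmin hl) fun he => ?_
    have := hzl ⟨hl, he.symm.trans hzm⟩
    linarith
  have h2 : ψ z ≤ ψ (z + δ) := hzm ▸ hmin hr
  have h3 := hmid (z - δ) (z + δ)
  rw [show (z - δ + (z + δ)) / 2 = z by ring] at h3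
  linarith

/-- A concave function on `(0, ∞)` continuous up to `0` is concave on `[0, ∞)`. -/
theorem ConcaveOn.Ici_of_Ioi {g : ℝ → ℝ} (hg : ConcaveOn ℝ (Set.Ioi 0) g)
    (hc : ContinuousOn g (Set.Ici 0)) : ConcaveOn ℝ (Set.Ici 0) g := by
  refine ⟨convex_Ici 0, ?_⟩
  intro x hx y hy a b ha hb hab
  have hx : (0 : ℝ) ≤ x := hx
  have hy : (0 : ℝ) ≤ y := hy
  have lim : ∀ u : ℝ, 0 ≤ u →
      Filter.Tendsto (fun ε => g (u + ε)) (nhdsWithin 0 (Set.Ioi 0)) (nhds (g u)) := by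
    intro u hu
    refine (hc u hu).tendsto.comp (tendsto_nhdsWithin_iff.2 ⟨?_, ?_⟩)
    · have : Filter.Tendsto (fun ε : ℝ => u + ε) (nhds 0) (nhds (u + 0)) :=
        (continuous_const.add continuous_id).tendsto 0
      rw [add_zero] at this
      exact this.mono_left nhdsWithin_le_nhds
    · filter_upwards [self_mem_nhdsWithin] with ε hε
      exact add_nonneg hu (le_of_lt hε)
  refine le_of_tendsto_of_tendsto (((lim x hx).const_smul a).add ((lim y hy).const_smul b))
    (lim (a • x + b • y) (by simp only [smul_eq_mul]; positivity)) ?_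
  filter_upwards [self_mem_nhdsWithin] with ε hε
  have hε : (0 : ℝ) < ε := hε
  have := hg.2 (x := x + ε) (y := y + ε) (add_pos_of_nonneg_of_pos hx hε)
    (add_pos_of_nonneg_of_pos hy hε) ha hb hab
  convert this using 2
  simp only [smul_eq_mul]
  linear_combination (-ε) * hab

/-- A positive increasing geometrically concave function `g` with `g x / x` decreasing is
concave. -/
theorem concaveOn_of_geomConcave {g : ℝ → ℝ} (hc : ContinuousOn g (Set.Ici 0))
    (hpos : ∀ x, 0 < x → 0 < g x)
    (hgeom : ∀ x y, 0 < x → 0 < y → Real.sqrt (g x * g y) ≤ g (Real.sqrt (x * y)))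
    (hmono : ∀ x y, 0 < x → x ≤ y → g x ≤ g y)
    (hquot : ∀ x y, 0 < x → x ≤ y → g y * x ≤ g x * y) :
    ConcaveOn ℝ (Set.Ici 0) g := by
  refine ConcaveOn.Ici_of_Ioi ?_ hc
  have hφ : ConcaveOn ℝ Set.univ fun s => Real.log (g (Real.exp s)) := by
    refine concaveOn_univ_of_midpoint ?_ fun x y => ?_
    · refine Continuous.log ?_ fun s => (hpos _ (Real.exp_pos s)).ne'
      exact hc.comp_continuous Real.continuous_exp fun s => (Real.exp_pos s).le
    · have hx := hpos _ (Real.exp_pos x)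
      have hy := hpos _ (Real.exp_pos y)
      have := Real.log_le_log (Real.sqrt_pos.2 (mul_pos hx hy))
        (hgeom _ _ (Real.exp_pos x) (Real.exp_pos y))
      rwa [Real.log_sqrt (mul_pos hx hy).le, Real.log_mul hx.ne' hy.ne', ← Real.exp_add,
        ← Real.exp_half] at this
  refine LinearOrder.concaveOn_of_lt (convex_Ioi 0) ?_
  intro x hx y hy hxy a b ha hb hab
  have hx : 0 < x := hx
  have hy : 0 < y := hy
  simp only [smul_eq_mul]
  obtain ⟨z, hz⟩ : ∃ z, z = a * x + b * y := ⟨_, rfl⟩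
  rw [← hz]
  have hz0 : 0 < z := by rw [hz]; positivity
  have ha' : a = 1 - b := by linarith
  have hxz : x < z := by rw [hz, ha']; nlinarith
  have hzy : z < y := by rw [hz, ha']; nlinarith
  have lxz := Real.log_lt_log hx hxz
  have lzy := Real.log_lt_log hz0 hzy
  set c : ℝ := (Real.log (g z) - Real.log (g x)) / (Real.log z - Real.log x) with hcdef
  have hd : 0 < Real.log z - Real.log x := by linarith
  have hc0 : 0 ≤ c := div_nonneg
    (sub_nonneg.2 (Real.log_le_log (hpos x hx) (hmono x z hx hxz.le))) hd.le
  have hc1 : c ≤ 1 := by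
    rw [hcdef, div_le_one hd]
    have := Real.log_le_log (mul_pos (hpos z hz0) hx) (hquot x z hx hxz.le)
    rw [Real.log_mul (hpos z hz0).ne' hx.ne', Real.log_mul (hpos x hx).ne' hz0.ne'] at this
    linarith
  have slope := hφ.slope_anti_adjacent (Set.mem_univ _) (Set.mem_univ _) lxz lzy
  simp only [Real.exp_log hx, Real.exp_log hz0, Real.exp_log hy] at slope
  have key : ∀ t, 0 < t → Real.log (g t) ≤ Real.log (g z) + c * (Real.log t - Real.log z) →
      g t ≤ g z * (1 + c * (t / z - 1)) := by
    intro t ht hle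
    have h1 : g t ≤ g z * (t / z) ^ c := by
      have htz : 0 < t / z := div_pos ht hz0
      rw [← Real.log_le_log_iff (hpos t ht) (mul_pos (hpos z hz0) (Real.rpow_pos_of_pos htz c)),
        Real.log_mul (hpos z hz0).ne' (Real.rpow_pos_of_pos htz c).ne', Real.log_rpow htz,
        Real.log_div ht.ne' hz0.ne']
      exact hle
    have h2 := rpow_one_add_le_one_add_mul_self (s := t / z - 1)
      (by have := div_pos ht hz0; linarith) hc0 hc1
    rw [add_sub_cancel] at h2
    exact h1.trans (mul_le_mul_of_nonneg_left h2 (hpos z hz0).le)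
  have kx := key x hx (by
    have : c * (Real.log z - Real.log x) = Real.log (g z) - Real.log (g x) :=
      div_mul_cancel₀ _ hd.ne'
    linarith)
  have ky := key y hy (by
    have := (div_le_iff₀ (by linarith)).1 slope
    linarith)
  have hsum : a * (x / z) + b * (y / z) = 1 := by
    rw [mul_div_assoc', mul_div_assoc', ← add_div, ← hz, div_self hz0.ne']
  calc a * g x + b * g y
      ≤ a * (g z * (1 + c * (x / z - 1))) + b * (g z * (1 + c * (y / z - 1))) := by gcongr
    _ = g z * ((a + b) + c * ((a * (x / z) + b * (y / z)) - (a + b))) := by ring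
    _ = g z := by rw [hsum, hab]; ring

/-- A nonnegative concave function on `[0, ∞)` is increasing. -/
theorem ConcaveOn.monotoneOn_of_nonneg {f : ℝ → ℝ} (hf : ConcaveOn ℝ (Set.Ici 0) f)
    (h0 : ∀ x ∈ Set.Ici (0 : ℝ), 0 ≤ f x) : MonotoneOn f (Set.Ici 0) := by
  intro x hx y hy hxy
  rcases hxy.eq_or_lt with rfl | hxy
  · rfl
  by_contra! hlt
  have hd : 0 < f x - f y := by linarith
  have hy0 := h0 y hy
  have hyx : 0 < y - x := by linarith
  obtain ⟨w, hw, hwd⟩ : ∃ w, 0 < w ∧ f y * (y - x) < w * (f x - f y) :=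
    ⟨f y * (y - x) / (f x - f y) + 1, by positivity, by
      rw [add_mul, div_mul_cancel₀ _ hd.ne']; linarith⟩
  have hy' : (0 : ℝ) ≤ y := hy
  have hm : y + w ∈ Set.Ici (0 : ℝ) := by simp only [Set.mem_Ici]; positivity
  have := hf.slope_anti_adjacent hx hm hxy (show y < y + w by linarith)
  rw [add_sub_cancel_left, div_le_div_iff₀ hw hyx] at this
  nlinarith [mul_nonneg (h0 _ hm) hyx.le]

/-- If `f` is nonnegative and concave on `[0, ∞)`, then `f x / x` is decreasing. -/
theorem ConcaveOn.mul_le_mul_of_nonneg {f : ℝ → ℝ} (hf : ConcaveOn ℝ (Set.Ici 0) f)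
    (h0 : 0 ≤ f 0) {x y : ℝ} (hx : 0 < x) (hxy : x ≤ y) : f y * x ≤ f x * y := by
  have hy : 0 < y := hx.trans_le hxy
  have hle : x / y ≤ 1 := (div_le_one hy).2 hxy
  have := hf.2 (x := 0) (y := y) Set.self_mem_Ici hy.le (sub_nonneg.2 hle)
    (div_pos hx hy).le (sub_add_cancel _ _)
  simp only [smul_eq_mul, mul_zero, zero_add, div_mul_cancel₀ _ hy.ne'] at this
  have h1 : x / y * f y ≤ f x := by nlinarith [mul_nonneg (sub_nonneg.2 hle) h0]
  calc f y * x = x / y * f y * y := by field_simp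
    _ ≤ f x * y := by gcongr

/-- If `f` is doubly concave on `[0, ∞)`, then `t ↦ f (t ^ (1 / p)) ^ p` is concave there. -/
theorem DoublyConcaveOn.concaveOn_rpow {f : ℝ → ℝ} (hf : DoublyConcaveOn f (Set.Ici 0))
    {p : ℝ} (hp : 0 < p) : ConcaveOn ℝ (Set.Ici 0) fun t => f (t ^ (1 / p)) ^ p := by
  have hmono := hf.concaveOn.monotoneOn_of_nonneg hf.nonneg
  have hquot : ∀ x y, 0 < x → x ≤ y → f y * x ≤ f x * y := fun x y hx hxy =>
    hf.concaveOn.mul_le_mul_of_nonneg (hf.nonneg 0 Set.self_mem_Ici) hx hxy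
  have hq : 0 < 1 / p := by positivity
  have hpow : ∀ x : ℝ, 0 ≤ x → (x ^ (1 / p)) ^ p = x := fun x hx => by
    rw [← Real.rpow_mul hx, one_div_mul_cancel hp.ne', Real.rpow_one]
  have hnn : ∀ x : ℝ, 0 ≤ x → 0 ≤ f x := fun x hx => hf.nonneg x hx
  have hc : ContinuousOn (fun t : ℝ => f (t ^ (1 / p)) ^ p) (Set.Ici 0) := by
    refine ContinuousOn.rpow_const ?_ fun _ _ => Or.inr hp.le
    refine hf.continuousOn.comp (Real.continuous_rpow_const hq.le).continuousOn ?_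
    exact fun x hx => Real.rpow_nonneg hx _
  by_cases hz : ∃ x, 0 < x ∧ f x = 0
  · obtain ⟨x, hx, hfx⟩ := hz
    have hzero : ∀ y ∈ Set.Ici (0 : ℝ), f y = 0 := by
      intro y hy
      refine le_antisymm ?_ (hf.nonneg y hy)
      rcases le_total y x with hyx | hxy
      · exact hfx ▸ hmono hy hx.le hyx
      · have := hquot x y hx hxy
        rw [hfx, zero_mul] at this
        exact nonpos_of_mul_nonpos_left this hx
    refine (concaveOn_const (0 : ℝ) (convex_Ici (0 : ℝ))).congr fun t ht => ?_
    simp only [hzero _ (Real.rpow_nonneg ht _), Real.zero_rpow hp.ne']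
  push Not at hz
  have hpos : ∀ x, 0 < x → 0 < f x := fun x hx => lt_of_le_of_ne (hnn x hx.le) (hz x hx).symm
  refine concaveOn_of_geomConcave hc ?_ ?_ ?_ ?_
  · exact fun x hx => Real.rpow_pos_of_pos (hpos _ (Real.rpow_pos_of_pos hx _)) _
  · intro x y hx hy
    have hx' := Real.rpow_nonneg hx.le (1 / p)
    have hy' := Real.rpow_nonneg hy.le (1 / p)
    have comm : ∀ u r : ℝ, 0 ≤ u → Real.sqrt (u ^ r) = Real.sqrt u ^ r := fun u r hu => by
      rw [Real.sqrt_eq_rpow, Real.sqrt_eq_rpow, ← Real.rpow_mul hu, ← Real.rpow_mul hu, mul_comm]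
    rw [← Real.mul_rpow (hnn _ hx') (hnn _ hy'), comm _ _ (mul_nonneg (hnn _ hx') (hnn _ hy')),
      ← comm _ _ (mul_nonneg hx.le hy.le), Real.mul_rpow hx.le hy.le]
    exact Real.rpow_le_rpow (Real.sqrt_nonneg _) (hf.geomConcave _ hx' _ hy') hp.le
  · intro x y hx hxy
    have hx' := Real.rpow_nonneg hx.le (1 / p)
    have hle := Real.rpow_le_rpow hx.le hxy hq.le
    exact Real.rpow_le_rpow (hnn _ hx') (hmono hx' (hx'.trans hle) hle) hp.le
  · intro x y hx hxy
    have hx' := Real.rpow_pos_of_pos hx (1 / p)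
    have hle := Real.rpow_le_rpow hx.le hxy hq.le
    have hy' := hx'.trans_le hle
    have := Real.rpow_le_rpow (mul_nonneg (hnn _ hy'.le) hx'.le) (hquot _ _ hx' hle) hp.le
    rwa [Real.mul_rpow (hnn _ hy'.le) hx'.le, Real.mul_rpow (hnn _ hx'.le) hy'.le,
      hpow x hx.le, hpow y (hx.le.trans hxy)] at this

namespace Matrix.IsHermitian

open Matrix

variable {ι : Type*} [Fintype ι] [DecidableEq ι] {A B : Matrix ι ι ℂ}

/-- The squared moduli of the coordinates of `v` in the eigenvector basis of `A`. -/
noncomputable def weight (hA : A.IsHermitian) (v : ι → ℂ) (k : ι) : ℝ :=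
  ‖(star (hA.eigenvectorUnitary : Matrix ι ι ℂ) *ᵥ v) k‖ ^ 2

theorem weight_nonneg (hA : A.IsHermitian) (v : ι → ℂ) (k : ι) : 0 ≤ hA.weight v k := sq_nonneg _

theorem cfc_eq_mul_diagonal_mul_s3 (hA : A.IsHermitian) (φ : ℝ → ℝ) :
    cfc φ A = (hA.eigenvectorUnitary : Matrix ι ι ℂ) *
      diagonal (fun i => (φ (hA.eigenvalues i) : ℂ)) *
        star (hA.eigenvectorUnitary : Matrix ι ι ℂ) := by
  rw [hA.cfc_eq, IsHermitian.cfc, Unitary.conjStarAlgAut_apply]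
  rfl

theorem dotProduct_cfc_mulVec (hA : A.IsHermitian) (φ : ℝ → ℝ) (v : ι → ℂ) :
    (star v ⬝ᵥ (cfc φ A *ᵥ v)).re = ∑ k, hA.weight v k * φ (hA.eigenvalues k) := by
  have h : star v ⬝ᵥ (cfc φ A *ᵥ v) = ((∑ k, hA.weight v k * φ (hA.eigenvalues k) : ℝ) : ℂ) := by
    have hstar : star v ᵥ* (hA.eigenvectorUnitary : Matrix ι ι ℂ) =
        star (star (hA.eigenvectorUnitary : Matrix ι ι ℂ) *ᵥ v) := by
      rw [star_mulVec, star_eq_conjTranspose, conjTranspose_conjTranspose]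
    rw [hA.cfc_eq_mul_diagonal_mul_s3, ← mulVec_mulVec, ← mulVec_mulVec, dotProduct_mulVec, hstar]
    simp only [dotProduct, mulVec_diagonal, Pi.star_apply, weight, Complex.ofReal_sum,
      Complex.ofReal_mul, Complex.ofReal_pow]
    refine Finset.sum_congr rfl fun k _ => ?_
    rw [← Complex.conj_mul', RCLike.star_def]
    ring
  rw [h, Complex.ofReal_re]

theorem dotProduct_mulVec_re (hA : A.IsHermitian) (v : ι → ℂ) :
    (star v ⬝ᵥ (A *ᵥ v)).re = ∑ k, hA.weight v k * hA.eigenvalues k := by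
  have := hA.dotProduct_cfc_mulVec (fun x => x) v
  rwa [cfc_id' ℝ A hA.isSelfAdjoint] at this

theorem sum_weight (hA : A.IsHermitian) (v : ι → ℂ) :
    ∑ k, hA.weight v k = (star v ⬝ᵥ v).re := by
  have := hA.dotProduct_cfc_mulVec (fun _ => 1) v
  rw [cfc_const_one ℝ A hA.isSelfAdjoint, one_mulVec] at this
  simpa using this.symm

/-- For each index `i` there is a unit vector at which the quadratic form of `A` is at most the
`i`-th eigenvalue of `A` and that of `B` is at least the `i`-th eigenvalue of `B`. -/
theorem exists_unit_between_eigenvalues (hA : A.IsHermitian) (hB : B.IsHermitian) (i : ι) :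
    ∃ v : ι → ℂ, (star v ⬝ᵥ v).re = 1 ∧ (star v ⬝ᵥ (A *ᵥ v)).re ≤ hA.eigenvalues i ∧
      hB.eigenvalues i ≤ (star v ⬝ᵥ (B *ᵥ v)).re := by
  set e : ι ≃ Fin (Fintype.card ι) := (Fintype.equivOfCardEq (Fintype.card_fin _)).symm
  have anti : ∀ {C : Matrix ι ι ℂ} (hC : C.IsHermitian) {j k : ι}, e j ≤ e k →
      hC.eigenvalues k ≤ hC.eigenvalues j := fun hC _ _ h => hC.eigenvalues₀_antitone h
  let L : (ι → ℂ) →ₗ[ℂ] ({k // k ≠ i} → ℂ) := LinearMap.pi fun k =>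
    if e k < e i then
      LinearMap.proj k.1 ∘ₗ mulVecLin (star (hA.eigenvectorUnitary : Matrix ι ι ℂ))
    else LinearMap.proj k.1 ∘ₗ mulVecLin (star (hB.eigenvectorUnitary : Matrix ι ι ℂ))
  have hker : LinearMap.ker L ≠ ⊥ := by
    refine LinearMap.ker_ne_bot_of_finrank_lt ?_
    rw [Module.finrank_fintype_fun_eq_card, Module.finrank_fintype_fun_eq_card]
    exact Fintype.card_subtype_lt (x := i) (by simp)
  obtain ⟨u, hu, hu0⟩ := (Submodule.ne_bot_iff _).1 hker
  obtain ⟨c, hc⟩ : ∃ c : ℝ, (star ((c : ℂ) • u) ⬝ᵥ ((c : ℂ) • u)).re = 1 := by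
    have hpos : 0 < star u ⬝ᵥ u := dotProduct_star_self_pos_iff.2 hu0
    obtain ⟨hre, -⟩ := Complex.pos_iff.1 hpos
    refine ⟨(Real.sqrt (star u ⬝ᵥ u).re)⁻¹, ?_⟩
    rw [star_smul, smul_dotProduct, dotProduct_smul, smul_smul, RCLike.star_def,
      Complex.conj_ofReal, ← Complex.ofReal_mul, smul_eq_mul, Complex.re_ofReal_mul, ← mul_inv,
      Real.mul_self_sqrt hre.le, inv_mul_cancel₀ hre.ne']
  have hv : (c : ℂ) • u ∈ LinearMap.ker L := Submodule.smul_mem _ _ hu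
  refine ⟨_, hc, ?_, ?_⟩
  · rw [hA.dotProduct_mulVec_re, ← mul_one (hA.eigenvalues i), ← hc, ← hA.sum_weight,
      Finset.mul_sum]
    refine Finset.sum_le_sum fun k _ => ?_
    rw [mul_comm]
    by_cases hk : e k < e i
    · have hki : k ≠ i := by rintro rfl; exact lt_irrefl _ hk
      have := congrFun (LinearMap.mem_ker.1 hv) ⟨k, hki⟩
      simp only [L, LinearMap.pi_apply, hk, if_true, LinearMap.comp_apply, mulVecLin_apply,
        LinearMap.proj_apply, Pi.zero_apply] at this
      simp only [weight, this, norm_zero, ne_eq, OfNat.ofNat_ne_zero, not_false_eq_true, zero_pow,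
        mul_zero, le_refl]
    · exact mul_le_mul_of_nonneg_right (anti hA (not_lt.1 hk)) (hA.weight_nonneg _ _)
  · rw [hB.dotProduct_mulVec_re, ← mul_one (hB.eigenvalues i), ← hc, ← hB.sum_weight,
      Finset.mul_sum]
    refine Finset.sum_le_sum fun k _ => ?_
    rw [mul_comm (hB.weight _ k)]
    by_cases hk : e k ≤ e i
    · exact mul_le_mul_of_nonneg_right (anti hB hk) (hB.weight_nonneg _ _)
    · have hki : k ≠ i := by rintro rfl; exact hk le_rfl
      have := congrFun (LinearMap.mem_ker.1 hv) ⟨k, hki⟩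
      simp only [L, LinearMap.pi_apply, (not_le.1 hk).not_gt, if_false, LinearMap.comp_apply,
        mulVecLin_apply, LinearMap.proj_apply, Pi.zero_apply] at this
      simp only [weight, this, norm_zero, ne_eq, OfNat.ofNat_ne_zero, not_false_eq_true, zero_pow,
        mul_zero, le_refl]

end Matrix.IsHermitian

open Matrix in
/-- Jensen's inequality for the quadratic form of a positive semidefinite matrix. -/
theorem Matrix.PosSemidef.dotProduct_cfc_mulVec_le {ι : Type*} [Fintype ι] [DecidableEq ι]
    {A : Matrix ι ι ℂ} (hA : A.PosSemidef) {g : ℝ → ℝ} (hg : ConcaveOn ℝ (Set.Ici 0) g)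
    {v : ι → ℂ} (hv : (star v ⬝ᵥ v).re = 1) :
    (star v ⬝ᵥ (cfc g A *ᵥ v)).re ≤ g (star v ⬝ᵥ (A *ᵥ v)).re := by
  rw [hA.1.dotProduct_cfc_mulVec, hA.1.dotProduct_mulVec_re]
  exact hg.le_map_sum (fun k _ => hA.1.weight_nonneg v k) ((hA.1.sum_weight v).trans hv)
    fun k _ => hA.eigenvalues_nonneg k

open Matrix in
/-- Eigenvalue form of the matrix concavity inequality for an increasing concave function. -/
theorem Matrix.PosSemidef.eigenvalues_midpoint_cfc_le {ι : Type*} [Fintype ι] [DecidableEq ι]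
    {X Y : Matrix ι ι ℂ} (hX : X.PosSemidef) (hY : Y.PosSemidef) {g : ℝ → ℝ}
    (hg : ConcaveOn ℝ (Set.Ici 0) g) (hmono : MonotoneOn g (Set.Ici 0))
    (hM : ((2 : ℂ)⁻¹ • (X + Y)).PosSemidef)
    (hG : ((2 : ℂ)⁻¹ • (cfc g X + cfc g Y)).IsHermitian) (i : ι) :
    hG.eigenvalues i ≤ g (hM.1.eigenvalues i) := by
  obtain ⟨v, hv, hMv, hGv⟩ := hM.1.exists_unit_between_eigenvalues hG i
  have split : ∀ P Q : Matrix ι ι ℂ, (star v ⬝ᵥ (((2 : ℂ)⁻¹ • (P + Q)) *ᵥ v)).re =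
      (1 / 2 : ℝ) • (star v ⬝ᵥ (P *ᵥ v)).re + (1 / 2 : ℝ) • (star v ⬝ᵥ (Q *ᵥ v)).re := by
    intro P Q
    rw [smul_mulVec, add_mulVec, dotProduct_smul, dotProduct_add, smul_eq_mul,
      show (2 : ℂ)⁻¹ = ((1 / 2 : ℝ) : ℂ) by norm_num, Complex.re_ofReal_mul, Complex.add_re,
      smul_eq_mul, smul_eq_mul, mul_add]
  have nn : ∀ {P : Matrix ι ι ℂ}, P.PosSemidef → (star v ⬝ᵥ (P *ᵥ v)).re ∈ Set.Ici (0 : ℝ) :=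
    fun hP => hP.re_dotProduct_nonneg v
  calc hG.eigenvalues i
      ≤ (star v ⬝ᵥ (((2 : ℂ)⁻¹ • (cfc g X + cfc g Y)) *ᵥ v)).re := hGv
    _ ≤ (1 / 2 : ℝ) • g (star v ⬝ᵥ (X *ᵥ v)).re + (1 / 2 : ℝ) • g (star v ⬝ᵥ (Y *ᵥ v)).re := by
        rw [split]
        gcongr
        · exact hX.dotProduct_cfc_mulVec_le hg hv
        · exact hY.dotProduct_cfc_mulVec_le hg hv
    _ ≤ g (star v ⬝ᵥ (((2 : ℂ)⁻¹ • (X + Y)) *ᵥ v)).re := by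
        rw [split]
        exact hg.2 (nn hX) (nn hY) (by norm_num) (by norm_num) (by norm_num)
    _ ≤ g (hM.1.eigenvalues i) := hmono (nn hM) (hM.eigenvalues_nonneg i) hMv

open Matrix in
/-- Entrywise comparison of transformed eigenvalues gives a Loewner inequality up to a unitary
conjugation. -/
theorem Matrix.IsHermitian.exists_unitary_cfc_le {ι : Type*} [Fintype ι] [DecidableEq ι]
    {M G : Matrix ι ι ℂ} (hM : M.IsHermitian) (hG : G.IsHermitian) {φ ψ : ℝ → ℝ}
    (h : ∀ i, ψ (hG.eigenvalues i) ≤ φ (hM.eigenvalues i)) :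
    ∃ V ∈ Matrix.unitaryGroup ι ℂ, (cfc φ M - V * cfc ψ G * star V).PosSemidef := by
  refine ⟨_, (hM.eigenvectorUnitary * star hG.eigenvectorUnitary).2, ?_⟩
  set U := hM.eigenvectorUnitary
  set W := hG.eigenvectorUnitary
  have hW : star (W : Matrix ι ι ℂ) * (W : Matrix ι ι ℂ) = 1 := Unitary.coe_star_mul_self W
  have hconj : (↑(U * star W) : Matrix ι ι ℂ) * cfc ψ G * star (↑(U * star W) : Matrix ι ι ℂ) =
      (U : Matrix ι ι ℂ) * diagonal (fun i => (ψ (hG.eigenvalues i) : ℂ)) *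
        star (U : Matrix ι ι ℂ) := by
    rw [hG.cfc_eq_mul_diagonal_mul_s3, Submonoid.coe_mul, Unitary.coe_star, star_mul, star_star]
    calc _ = (U : Matrix ι ι ℂ) * (star (W : Matrix ι ι ℂ) * W) *
          diagonal (fun i => (ψ (hG.eigenvalues i) : ℂ)) * (star (W : Matrix ι ι ℂ) * W) *
            star (U : Matrix ι ι ℂ) := by simp only [mul_assoc]; rfl
      _ = _ := by rw [hW, mul_one, mul_one]
  rw [hconj, hM.cfc_eq_mul_diagonal_mul_s3, ← sub_mul, ← mul_sub, diagonal_sub,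
    star_eq_conjTranspose]
  refine PosSemidef.mul_mul_conjTranspose_same (PosSemidef.diagonal fun i => ?_) _
  rw [Pi.zero_apply, ← Complex.ofReal_sub]
  exact Complex.zero_le_real.2 (sub_nonneg.2 (h i))

theorem Matrix.IsHermitian.cfc_cfc {ι : Type*} [Fintype ι] [DecidableEq ι]
    {A : Matrix ι ι ℂ} (hA : A.IsHermitian) (φ ψ : ℝ → ℝ) :
    cfc φ (cfc ψ A) = cfc (fun x => φ (ψ x)) A := by
  have hfin : (spectrum ℝ A).Finite := Matrix.finite_real_spectrum
  exact (cfc_comp' φ ψ A ((hfin.image ψ).continuousOn φ) (hfin.continuousOn ψ)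
    hA.isSelfAdjoint).symm

theorem Matrix.PosSemidef.cfc_congr_nonneg {ι : Type*} [Fintype ι] [DecidableEq ι]
    {A : Matrix ι ι ℂ} (hA : A.PosSemidef) {φ ψ : ℝ → ℝ} (h : ∀ x, 0 ≤ x → φ x = ψ x) :
    cfc φ A = cfc ψ A := by
  refine cfc_congr fun x hx => h x ?_
  rw [hA.1.spectrum_real_eq_range_eigenvalues] at hx
  obtain ⟨i, rfl⟩ := hx
  exact hA.eigenvalues_nonneg i

theorem Matrix.PosSemidef.cfc_posSemidef {ι : Type*} [Fintype ι] [DecidableEq ι]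
    {A : Matrix ι ι ℂ} (hA : A.PosSemidef) {φ : ℝ → ℝ} (h : ∀ x, 0 ≤ x → 0 ≤ φ x) :
    (cfc φ A).PosSemidef := by
  rw [hA.1.cfc_eq_mul_diagonal_mul_s3, Matrix.star_eq_conjTranspose]
  refine Matrix.PosSemidef.mul_mul_conjTranspose_same (Matrix.PosSemidef.diagonal fun i => ?_) _
  exact Complex.zero_le_real.2 (h _ (hA.eigenvalues_nonneg i))

theorem stmt_3 {n : ℕ} (f : ℝ → ℝ) (hf : DoublyConcaveOn f (Set.Ici 0))
    (A B : Matrix (Fin n) (Fin n) ℂ) (hA : A.PosSemidef) (hB : B.PosSemidef)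
    (p : ℝ) (hp0 : 0 < p) (hp1 : p ≤ 1) :
    ∃ V ∈ Matrix.unitaryGroup (Fin n) ℂ,
      (cfc f (betaP p A B) - V * betaP p (cfc f A) (cfc f B) * star V).PosSemidef := by
  have hp : 0 < 1 / p := by positivity
  have hpow : ∀ x : ℝ, 0 ≤ x → (x ^ p) ^ (1 / p) = x := fun x hx => by
    rw [← Real.rpow_mul hx, mul_one_div_cancel hp0.ne', Real.rpow_one]
  set g : ℝ → ℝ := fun t => f (t ^ (1 / p)) ^ p with hg
  have hgc : ConcaveOn ℝ (Set.Ici 0) g := hf.concaveOn_rpow hp0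
  have hg0 : ∀ x, 0 ≤ x → 0 ≤ g x := fun x hx =>
    Real.rpow_nonneg (hf.nonneg _ (Real.rpow_nonneg hx _)) _
  have hpsd : ∀ {C : Matrix (Fin n) (Fin n) ℂ}, C.PosSemidef →
      (cfc (fun x : ℝ => x ^ p) C).PosSemidef := fun hC =>
    hC.cfc_posSemidef fun x hx => Real.rpow_nonneg hx p
  have hcomp : ∀ {C : Matrix (Fin n) (Fin n) ℂ}, C.PosSemidef →
      cfc (fun x : ℝ => x ^ p) (cfc f C) = cfc g (cfc (fun x : ℝ => x ^ p) C) := by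
    intro C hC
    rw [hC.1.cfc_cfc, hC.1.cfc_cfc]
    refine hC.cfc_congr_nonneg fun x hx => ?_
    simp only [hg, hpow x hx]
  have hhalf : (0 : ℂ) ≤ 2⁻¹ := by
    rw [inv_nonneg]
    exact zero_le_two
  have hM := ((hpsd hA).add (hpsd hB)).smul hhalf
  have hG := (((hpsd hA).cfc_posSemidef hg0).add ((hpsd hB).cfc_posSemidef hg0)).smul hhalf
  unfold betaP
  rw [hcomp hA, hcomp hB, hM.1.cfc_cfc]
  refine hM.1.exists_unitary_cfc_le hG.1 fun i => ?_
  have hle := (hpsd hA).eigenvalues_midpoint_cfc_le (hpsd hB) hgc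
    (hgc.monotoneOn_of_nonneg hg0) hM hG.1 i
  have := Real.rpow_le_rpow (hG.eigenvalues_nonneg i) hle hp.le
  exact this.trans_eq (hpow _ (hf.nonneg _ (Real.rpow_nonneg (hM.eigenvalues_nonneg i) _)))
end

section
/- Let 𝔼 : M_n(ℂ) → M_m(ℂ) be a sub-unital positive linear map, let g be a non-negative convex function on [0,∞) with g(0) = 0, let Z be an n×n positive semidefinite matrix, and let q ≥ 1. Then there exists a unitary V ∈ M_m(ℂ) such that g(𝔼_q(Z)) ≤ V 𝔼_q(g(Z)) V* in the positive semidefinite (Loewner) order, where 𝔼_q(Z) := (𝔼(Z^q))^{1/q}. -/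
open scoped ComplexOrder

open Matrix

theorem ConvexOn.monotoneOn_of_nonneg_of_map_zero {g : ℝ → ℝ} (hg0 : g 0 = 0)
    (hgnn : ∀ x : ℝ, 0 ≤ x → 0 ≤ g x) (hgconv : ConvexOn ℝ (Set.Ici 0) g) :
    MonotoneOn g (Set.Ici 0) := by
  intro x hx y hy hxy
  rw [Set.mem_Ici] at hx hy
  rcases hy.eq_or_lt with rfl | hy'
  · rw [le_antisymm hxy hx]
  have ht : x / y ≤ 1 := div_le_one_of_le₀ hxy hy
  have h := hgconv.2 (Set.mem_Ici.2 le_rfl) (Set.mem_Ici.2 hy) (sub_nonneg.2 ht)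
    (div_nonneg hx hy) (by ring)
  simp only [smul_eq_mul, mul_zero, zero_add, hg0, div_mul_cancel₀ x hy'.ne'] at h
  exact h.trans (mul_le_of_le_one_left (hgnn y hy) ht)

/-- Jensen's inequality for weighted `q`-means of total weight at most one. -/
theorem ConvexOn.map_rpow_mean_le {ι : Type*} [Fintype ι] {g : ℝ → ℝ} (hg0 : g 0 = 0)
    (hgnn : ∀ x : ℝ, 0 ≤ x → 0 ≤ g x) (hgconv : ConvexOn ℝ (Set.Ici 0) g)
    {q : ℝ} (hq : 1 ≤ q) {w μ : ι → ℝ} (hw : ∀ i, 0 ≤ w i) (hw1 : ∑ i, w i ≤ 1)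
    (hμ : ∀ i, 0 ≤ μ i) :
    g ((∑ i, w i * μ i ^ q) ^ (1 / q)) ≤ (∑ i, w i * g (μ i) ^ q) ^ (1 / q) := by
  have hq0 : 0 < q := by linarith
  set y := (∑ i, w i * μ i ^ q) ^ (1 / q) with hy
  have hsum0 : 0 ≤ ∑ i, w i * μ i ^ q :=
    Finset.sum_nonneg fun i _ => mul_nonneg (hw i) (Real.rpow_nonneg (hμ i) _)
  have hsg0 : 0 ≤ ∑ i, w i * g (μ i) ^ q :=
    Finset.sum_nonneg fun i _ => mul_nonneg (hw i) (Real.rpow_nonneg (hgnn _ (hμ i)) _)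
  have hy0 : 0 ≤ y := Real.rpow_nonneg hsum0 _
  rcases hy0.eq_or_lt with h0 | hypos
  · rw [← h0, hg0]; exact Real.rpow_nonneg hsg0 _
  obtain ⟨a, ha⟩ : ∃ a, ∀ x, 0 ≤ x → g y + a * (x - y) ≤ g x := by
    refine ⟨derivWithin g (Set.Ioi y) y, fun x hx => ?_⟩
    have hyi : y ∈ interior (Set.Ici (0 : ℝ)) := by simpa using hypos
    rcases lt_trichotomy x y with h | rfl | h
    · have h1 := (hgconv.slope_le_leftDeriv_of_mem_interior hx hyi h).trans
        (hgconv.leftDeriv_le_rightDeriv_of_mem_interior hyi)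
      rw [slope_def_field, div_le_iff₀ (sub_pos.2 h)] at h1
      linarith
    · simp
    · have h1 := hgconv.rightDeriv_le_slope_of_mem_interior hyi hx h
      rw [slope_def_field, le_div_iff₀ (sub_pos.2 h)] at h1
      linarith
  have hb := ha 0 le_rfl
  rw [hg0] at hb
  set b := a * y - g y with hbdef
  have hb0 : 0 ≤ b := by rw [hbdef]; linarith
  have ha0 : 0 ≤ a := by
    have := hgnn y hy0
    by_contra! h
    nlinarith
  have hrt : ∀ x : ℝ, 0 ≤ x → (x ^ (1 / q)) ^ q = x := fun x hx => by
    rw [← Real.rpow_mul hx, one_div_mul_cancel hq0.ne', Real.rpow_one]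
  have hrt' : ∀ x : ℝ, 0 ≤ x → (x ^ q) ^ (1 / q) = x := fun x hx => by
    rw [← Real.rpow_mul hx, mul_one_div_cancel hq0.ne', Real.rpow_one]
  have hwr : ∀ i, ∀ x : ℝ, 0 ≤ x → (w i ^ (1 / q) * x) ^ q = w i * x ^ q := fun i x hx => by
    rw [Real.mul_rpow (Real.rpow_nonneg (hw i) _) hx, hrt _ (hw i)]
  have mink := Real.Lp_add_le_of_nonneg (s := Finset.univ)
    (f := fun i => w i ^ (1 / q) * g (μ i)) (g := fun i => w i ^ (1 / q) * b) hq
    (fun i _ => mul_nonneg (Real.rpow_nonneg (hw i) _) (hgnn _ (hμ i)))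
    (fun i _ => mul_nonneg (Real.rpow_nonneg (hw i) _) hb0)
  simp_rw [← mul_add] at mink
  have e1 : ∑ i, (w i ^ (1 / q) * g (μ i)) ^ q = ∑ i, w i * g (μ i) ^ q :=
    Finset.sum_congr rfl fun i _ => hwr i _ (hgnn _ (hμ i))
  have e2 : (∑ i, (w i ^ (1 / q) * b) ^ q) ^ (1 / q) ≤ b := by
    have : ∑ i, (w i ^ (1 / q) * b) ^ q ≤ b ^ q := by
      simp_rw [hwr _ b hb0, ← Finset.sum_mul]
      exact mul_le_of_le_one_left (Real.rpow_nonneg hb0 _) hw1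
    refine (Real.rpow_le_rpow (Finset.sum_nonneg fun i _ => ?_) this (by positivity)).trans_eq
      (hrt' b hb0)
    exact Real.rpow_nonneg (mul_nonneg (Real.rpow_nonneg (hw i) _) hb0) _
  have e3 : a * y ≤ (∑ i, (w i ^ (1 / q) * (g (μ i) + b)) ^ q) ^ (1 / q) := by
    rw [← hrt' (a * y) (by positivity)]
    refine Real.rpow_le_rpow (by positivity) ?_ (by positivity)
    rw [Real.mul_rpow ha0 hy0, hy, hrt _ hsum0, Finset.mul_sum]
    refine Finset.sum_le_sum fun i _ => ?_
    rw [hwr i _ (add_nonneg (hgnn _ (hμ i)) hb0), mul_left_comm, ← Real.mul_rpow ha0 (hμ i)]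
    refine mul_le_mul_of_nonneg_left (Real.rpow_le_rpow (mul_nonneg ha0 (hμ i)) ?_ hq0.le) (hw i)
    have := ha (μ i) (hμ i)
    linarith
  rw [e1] at mink
  linarith

namespace Matrix

variable {ι : Type*} [Fintype ι] [DecidableEq ι] {A B : Matrix ι ι ℂ}

/-- The rank-one projection onto the `i`-th chosen eigenvector of a Hermitian matrix. -/
noncomputable def IsHermitian.eigenproj (hA : A.IsHermitian) (i : ι) : Matrix ι ι ℂ :=
  vecMulVec (hA.eigenvectorBasis i) (star ⇑(hA.eigenvectorBasis i))

theorem IsHermitian.posSemidef_eigenproj (hA : A.IsHermitian) (i : ι) :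
    (hA.eigenproj i).PosSemidef :=
  posSemidef_vecMulVec_self_star _

theorem IsHermitian.cfc_eq_mul (hA : A.IsHermitian) (f : ℝ → ℝ) :
    cfc f A = (hA.eigenvectorUnitary : Matrix ι ι ℂ) *
      diagonal (fun i => (f (hA.eigenvalues i) : ℂ)) *
        star (hA.eigenvectorUnitary : Matrix ι ι ℂ) := by
  rw [hA.cfc_eq, IsHermitian.cfc, Unitary.conjStarAlgAut_apply]
  rfl

theorem IsHermitian.cfc_eq_sum_eigenproj (hA : A.IsHermitian) (f : ℝ → ℝ) :
    cfc f A = ∑ i, (f (hA.eigenvalues i) : ℂ) • hA.eigenproj i := by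
  rw [hA.cfc_eq_mul]
  ext j k
  rw [mul_apply]
  simp only [mul_diagonal, sum_apply, smul_apply, IsHermitian.eigenproj,
    vecMulVec_apply, star_apply, Pi.star_apply, IsHermitian.eigenvectorUnitary_apply, smul_eq_mul]
  exact Finset.sum_congr rfl fun i _ => by ring

/-- The squared modulus of the `i`-th coordinate of `v` in the chosen eigenbasis. -/
noncomputable def IsHermitian.coordSq (hA : A.IsHermitian) (v : ι → ℂ) (i : ι) : ℝ :=
  Complex.normSq ((star (hA.eigenvectorUnitary : Matrix ι ι ℂ) *ᵥ v) i)

theorem IsHermitian.dotProduct_cfc_mulVec_s5 (hA : A.IsHermitian) (f : ℝ → ℝ) (v : ι → ℂ) :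
    star v ⬝ᵥ (cfc f A *ᵥ v) = ((∑ i, f (hA.eigenvalues i) * hA.coordSq v i : ℝ) : ℂ) := by
  rw [hA.cfc_eq_mul, ← mulVec_mulVec, ← mulVec_mulVec, dotProduct_mulVec,
    show star v ᵥ* (hA.eigenvectorUnitary : Matrix ι ι ℂ) =
      star (star (hA.eigenvectorUnitary : Matrix ι ι ℂ) *ᵥ v) by
        rw [star_mulVec, star_eq_conjTranspose, conjTranspose_conjTranspose]]
  simp only [dotProduct, mulVec_diagonal, Pi.star_apply, IsHermitian.coordSq,
    Complex.ofReal_sum, Complex.ofReal_mul, Complex.normSq_eq_conj_mul_self]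
  exact Finset.sum_congr rfl fun i _ => by simp only [Complex.star_def]; ring

theorem IsHermitian.dotProduct_mulVec_self (hA : A.IsHermitian) (v : ι → ℂ) :
    star v ⬝ᵥ (A *ᵥ v) = ((∑ i, hA.eigenvalues i * hA.coordSq v i : ℝ) : ℂ) := by
  conv_lhs => rw [← cfc_id ℝ A (ha := hA.isSelfAdjoint)]
  exact hA.dotProduct_cfc_mulVec_s5 id v

theorem IsHermitian.dotProduct_star_self (hA : A.IsHermitian) (v : ι → ℂ) :
    star v ⬝ᵥ v = ((∑ i, hA.coordSq v i : ℝ) : ℂ) := by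
  have h := hA.dotProduct_cfc_mulVec_s5 (fun _ => 1) v
  rw [cfc_const_one ℝ A (ha := hA.isSelfAdjoint)] at h
  simpa using h

/-- For every index there is a nonzero vector whose Rayleigh quotient is at least the corresponding
eigenvalue of `A` and at most the corresponding eigenvalue of `B`. -/
theorem IsHermitian.exists_rayleigh_between (hA : A.IsHermitian) (hB : B.IsHermitian) (j : ι) :
    ∃ v : ι → ℂ, v ≠ 0 ∧
      hA.eigenvalues j * (star v ⬝ᵥ v).re ≤ (star v ⬝ᵥ (A *ᵥ v)).re ∧
      (star v ⬝ᵥ (B *ᵥ v)).re ≤ hB.eigenvalues j * (star v ⬝ᵥ v).re := by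
  let e : Fin (Fintype.card ι) ≃ ι := Fintype.equivOfCardEq (Fintype.card_fin _)
  let M : Matrix ι ι ℂ := of fun i k =>
    if e.symm i < e.symm j then star (hB.eigenvectorUnitary : Matrix ι ι ℂ) i k
    else if e.symm j < e.symm i then star (hA.eigenvectorUnitary : Matrix ι ι ℂ) i k else 0
  have hM : M.det = 0 := det_eq_zero_of_row_eq_zero j fun k => by simp [M]
  obtain ⟨v, hv0, hv⟩ := exists_mulVec_eq_zero_iff.2 hM
  have hBv : ∀ i, e.symm i < e.symm j → hB.coordSq v i = 0 := fun i hi => by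
    have := congrFun hv i
    simp only [M, mulVec, dotProduct, of_apply, if_pos hi] at this
    simpa [IsHermitian.coordSq, mulVec, dotProduct] using this
  have hAv : ∀ i, e.symm j < e.symm i → hA.coordSq v i = 0 := fun i hi => by
    have := congrFun hv i
    simp only [M, mulVec, dotProduct, of_apply, if_neg hi.not_gt, if_pos hi] at this
    simpa [IsHermitian.coordSq, mulVec, dotProduct] using this
  refine ⟨v, hv0, ?_, ?_⟩
  · rw [hA.dotProduct_mulVec_self, hA.dotProduct_star_self, Complex.ofReal_re, Complex.ofReal_re,
      Finset.mul_sum]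
    refine Finset.sum_le_sum fun i _ => ?_
    rcases lt_or_ge (e.symm j) (e.symm i) with h | h
    · simp [hAv i h]
    · exact mul_le_mul_of_nonneg_right (hA.eigenvalues₀_antitone h) (Complex.normSq_nonneg _)
  · rw [hB.dotProduct_mulVec_self, hB.dotProduct_star_self, Complex.ofReal_re, Complex.ofReal_re,
      Finset.mul_sum]
    refine Finset.sum_le_sum fun i _ => ?_
    rcases lt_or_ge (e.symm i) (e.symm j) with h | h
    · simp [hBv i h]
    · exact mul_le_mul_of_nonneg_right (hB.eigenvalues₀_antitone h) (Complex.normSq_nonneg _)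

/-- Pointwise domination of eigenvalues gives Loewner domination up to a unitary conjugation. -/
theorem IsHermitian.exists_unitary_cfc_le_s5 (hA : A.IsHermitian) (hB : B.IsHermitian) {f h : ℝ → ℝ}
    (hfh : ∀ i, f (hA.eigenvalues i) ≤ h (hB.eigenvalues i)) :
    ∃ V ∈ unitaryGroup ι ℂ, (V * cfc h B * star V - cfc f A).PosSemidef := by
  refine ⟨_, (hA.eigenvectorUnitary * star hB.eigenvectorUnitary).2, ?_⟩
  set U := hA.eigenvectorUnitary
  set W := hB.eigenvectorUnitary
  have hW : star (W : Matrix ι ι ℂ) * W = 1 := Unitary.coe_star_mul_self W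
  have key : ((U * star W : unitaryGroup ι ℂ) : Matrix ι ι ℂ) * cfc h B *
      star ((U * star W : unitaryGroup ι ℂ) : Matrix ι ι ℂ) - cfc f A =
      (U : Matrix ι ι ℂ) *
        diagonal (fun i => ((h (hB.eigenvalues i) - f (hA.eigenvalues i) : ℝ) : ℂ)) *
          (U : Matrix ι ι ℂ)ᴴ := by
    rw [hB.cfc_eq_mul, hA.cfc_eq_mul]
    change (U : Matrix ι ι ℂ) * star (W : Matrix ι ι ℂ) * ((W : Matrix ι ι ℂ) * _ *
      star (W : Matrix ι ι ℂ)) * star ((U : Matrix ι ι ℂ) * star (W : Matrix ι ι ℂ)) - _ = _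
    have hd : diagonal (fun i => ((h (hB.eigenvalues i) - f (hA.eigenvalues i) : ℝ) : ℂ)) =
        diagonal (fun i => (h (hB.eigenvalues i) : ℂ)) -
          diagonal (fun i => (f (hA.eigenvalues i) : ℂ)) := by
      rw [diagonal_sub]; simp
    rw [hd, star_mul, star_star, mul_sub, sub_mul, ← star_eq_conjTranspose]
    congr 1
    simp only [mul_assoc]
    rw [← mul_assoc (star (W : Matrix ι ι ℂ)) (W : Matrix ι ι ℂ), hW, one_mul,
      ← mul_assoc (star (W : Matrix ι ι ℂ)) (W : Matrix ι ι ℂ), hW, one_mul]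
  rw [key]
  refine PosSemidef.mul_mul_conjTranspose_same (PosSemidef.diagonal fun i => ?_) _
  exact Complex.zero_le_real.2 (sub_nonneg.2 (hfh i))

/-- The quadratic forms of a positive sub-unital map applied to functions of `Z` are weighted sums
over the eigenvalues of `Z`. -/
theorem IsHermitian.exists_weights {κ : Type*} [Fintype κ] [DecidableEq κ]
    {Z : Matrix ι ι ℂ} (hZ : Z.IsHermitian) (E : Matrix ι ι ℂ →ₗ[ℂ] Matrix κ κ ℂ)
    (hpos : ∀ A : Matrix ι ι ℂ, A.PosSemidef → (E A).PosSemidef)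
    (hsub : (1 - E 1).PosSemidef) {v : κ → ℂ} (hv : v ≠ 0) :
    ∃ w : ι → ℝ, (∀ i, 0 ≤ w i) ∧ ∑ i, w i ≤ 1 ∧ ∀ f : ℝ → ℝ,
      (star v ⬝ᵥ (E (cfc f Z) *ᵥ v)).re =
        (∑ i, w i * f (hZ.eigenvalues i)) * (star v ⬝ᵥ v).re := by
  have hs : 0 < (star v ⬝ᵥ v).re := (Complex.pos_iff.1 (dotProduct_star_self_pos_iff.2 hv)).1
  have hform : ∀ f : ℝ → ℝ, (star v ⬝ᵥ (E (cfc f Z) *ᵥ v)).re =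
      (∑ i, (star v ⬝ᵥ (E (hZ.eigenproj i) *ᵥ v)).re / (star v ⬝ᵥ v).re * f (hZ.eigenvalues i)) *
        (star v ⬝ᵥ v).re := fun f => by
    rw [hZ.cfc_eq_sum_eigenproj, map_sum, sum_mulVec, dotProduct_sum, Complex.re_sum,
      Finset.sum_mul]
    refine Finset.sum_congr rfl fun i _ => ?_
    rw [map_smul, smul_mulVec, dotProduct_smul, smul_eq_mul, Complex.re_ofReal_mul]
    field_simp
  refine ⟨_, fun i => div_nonneg ?_ hs.le, ?_, hform⟩
  · exact (Complex.nonneg_iff.1 ((hpos _ (hZ.posSemidef_eigenproj i)).dotProduct_mulVec_nonneg v)).1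
  · have h1 := hform fun _ => 1
    rw [cfc_const_one ℝ Z (ha := hZ.isSelfAdjoint)] at h1
    have h2 := (Complex.nonneg_iff.1 (hsub.dotProduct_mulVec_nonneg v)).1
    rw [sub_mulVec, one_mulVec, dotProduct_sub, Complex.sub_re, h1] at h2
    simp only [mul_one] at h2
    nlinarith

theorem IsHermitian.cfc_cfc_s5 (hA : A.IsHermitian) (f h : ℝ → ℝ) :
    cfc f (cfc h A) = cfc (fun x => f (h x)) A :=
  (cfc_comp' f h A ((A.finite_real_spectrum.image h).continuousOn f)
    (A.finite_real_spectrum.continuousOn h) hA.isSelfAdjoint).symm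

theorem IsHermitian.posSemidef_cfc_s5 (hA : A.IsHermitian) {f : ℝ → ℝ}
    (hf : ∀ i, 0 ≤ f (hA.eigenvalues i)) : (cfc f A).PosSemidef := by
  rw [hA.cfc_eq_mul]
  exact (PosSemidef.diagonal fun i =>
    Complex.zero_le_real.2 (hf i)).mul_mul_conjTranspose_same _

end Matrix

theorem stmt_5 {n m : ℕ} (E : Matrix (Fin n) (Fin n) ℂ →ₗ[ℂ] Matrix (Fin m) (Fin m) ℂ)
    (hpos : ∀ A : Matrix (Fin n) (Fin n) ℂ, A.PosSemidef → (E A).PosSemidef)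
    (hsub : (1 - E 1).PosSemidef)
    (g : ℝ → ℝ) (hg0 : g 0 = 0) (hgnn : ∀ x : ℝ, 0 ≤ x → 0 ≤ g x)
    (hgconv : ConvexOn ℝ (Set.Ici 0) g)
    (Z : Matrix (Fin n) (Fin n) ℂ) (hZ : Z.PosSemidef)
    (q : ℝ) (hq : 1 ≤ q) :
    ∃ V ∈ Matrix.unitaryGroup (Fin m) ℂ,
      (V * Ep E q (cfc g Z) * star V - cfc g (Ep E q Z)).PosSemidef := by
  have hμ : ∀ i, 0 ≤ hZ.1.eigenvalues i := hZ.eigenvalues_nonneg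
  have hX : (E (cfc (fun x : ℝ => x ^ q) Z)).PosSemidef :=
    hpos _ (hZ.1.posSemidef_cfc_s5 fun i => Real.rpow_nonneg (hμ i) _)
  have hY : (E (cfc (fun x : ℝ => g x ^ q) Z)).PosSemidef :=
    hpos _ (hZ.1.posSemidef_cfc_s5 fun i => Real.rpow_nonneg (hgnn _ (hμ i)) _)
  rw [Ep, Ep, hZ.1.cfc_cfc_s5, hX.1.cfc_cfc_s5]
  refine hX.1.exists_unitary_cfc_le_s5 hY.1 fun j => ?_
  obtain ⟨v, hv, hXv, hYv⟩ := hX.1.exists_rayleigh_between hY.1 j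
  obtain ⟨w, hw, hw1, hform⟩ := hZ.1.exists_weights E hpos hsub hv
  have hs : 0 < (star v ⬝ᵥ v).re := (Complex.pos_iff.1 (dotProduct_star_self_pos_iff.2 hv)).1
  have hq0 : 0 ≤ 1 / q := by positivity
  rw [hform] at hXv hYv
  replace hXv := le_of_mul_le_mul_right hXv hs
  replace hYv := le_of_mul_le_mul_right hYv hs
  have hξ := hX.eigenvalues_nonneg j
  calc g (hX.1.eigenvalues j ^ (1 / q))
      ≤ g ((∑ i, w i * hZ.1.eigenvalues i ^ q) ^ (1 / q)) :=
        ConvexOn.monotoneOn_of_nonneg_of_map_zero hg0 hgnn hgconv (Real.rpow_nonneg hξ _)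
          (Real.rpow_nonneg (hξ.trans hXv) _) (Real.rpow_le_rpow hξ hXv hq0)
    _ ≤ (∑ i, w i * g (hZ.1.eigenvalues i) ^ q) ^ (1 / q) :=
        hgconv.map_rpow_mean_le hg0 hgnn hq hw hw1 hμ
    _ ≤ hY.1.eigenvalues j ^ (1 / q) :=
        Real.rpow_le_rpow (Finset.sum_nonneg fun i _ =>
          mul_nonneg (hw i) (Real.rpow_nonneg (hgnn _ (hμ i)) _)) hYv hq0
end
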